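/- Under the standing assumptions (α ∈ (1/3,1/2), T > 0, α-Hölder rough path 𝐗, monotone family of interpolation spaces, analytic semigroup S with the scale bounds, F satisfying (F), G satisfying (G)), let (y, G(y)) ∈ D^{2α}_{X,γ} be a solution of the rough evolution equation dy = (Ay + F(y))dt + G(y)d𝐗 on [0,T] with initial data y₀ ∈ B_γ. Then, with η := (α − σ) ∧ (1 − δ), the a-priori estimate ‖y, G(y)‖_{X,2α,γ} ≲ 1 + |y₀|_{B_γ} + T^η ‖y, G(y)‖_{X,2α,γ} holds, with a constant independent of y₀ and uniform in T on compact intervals. -/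

import Mathlib

open Set

/-- A monotone family of interpolation spaces: a scale `(B_θ)_{θ ∈ ℝ}` of separable Banach
spaces realised inside a common ambient real vector space `E`; `Mem θ x` means `x ∈ B_θ`,
`N θ x` denotes the norm `|x|_θ`.  For `β₁ ≤ β₂` the space `B_{β₂}` is contained in `B_{β₁}`
with dense and continuous embedding, and the interpolation inequality holds. -/
structure BanachScale where
  E : Type
  [inst_add : AddCommGroup E]
  [inst_mod : Module ℝ E]
  Mem : ℝ → E → Prop
  N : ℝ → E → ℝ
  mem_zero : ∀ θ : ℝ, Mem θ 0
  mem_add : ∀ (θ : ℝ) (x y : E), Mem θ x → Mem θ y → Mem θ (x + y)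
  mem_neg : ∀ (θ : ℝ) (x : E), Mem θ x → Mem θ (-x)
  mem_smul : ∀ (θ c : ℝ) (x : E), Mem θ x → Mem θ (c • x)
  N_nonneg : ∀ (θ : ℝ) (x : E), 0 ≤ N θ x
  N_zero : ∀ θ : ℝ, N θ 0 = 0
  N_eq_zero : ∀ (θ : ℝ) (x : E), Mem θ x → N θ x = 0 → x = 0
  N_add : ∀ (θ : ℝ) (x y : E), Mem θ x → Mem θ y → N θ (x + y) ≤ N θ x + N θ y
  N_smul : ∀ (θ c : ℝ) (x : E), N θ (c • x) = |c| * N θ x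
  mem_mono : ∀ ⦃β₁ β₂ : ℝ⦄, β₁ ≤ β₂ → ∀ x : E, Mem β₂ x → Mem β₁ x
  embed_bound : ∀ ⦃β₁ β₂ : ℝ⦄, β₁ ≤ β₂ → ∃ C > (0:ℝ), ∀ x : E, Mem β₂ x → N β₁ x ≤ C * N β₂ x
  embed_dense : ∀ ⦃β₁ β₂ : ℝ⦄, β₁ ≤ β₂ → ∀ x : E, Mem β₁ x → ∀ ε > (0:ℝ),
    ∃ y : E, Mem β₂ y ∧ N β₁ (x - y) < ε
  complete : ∀ (θ : ℝ) (u : ℕ → E), (∀ n, Mem θ (u n)) →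
    (∀ ε > (0:ℝ), ∃ M : ℕ, ∀ m ≥ M, ∀ n ≥ M, N θ (u m - u n) < ε) →
    ∃ x : E, Mem θ x ∧ ∀ ε > (0:ℝ), ∃ M : ℕ, ∀ n ≥ M, N θ (u n - x) < ε
  separable : ∀ θ : ℝ, ∃ D : Set E, D.Countable ∧ (∀ x ∈ D, Mem θ x) ∧
    ∀ x : E, Mem θ x → ∀ ε > (0:ℝ), ∃ y ∈ D, N θ (x - y) < ε
  interp : ∀ ⦃θ β γ : ℝ⦄, θ ≤ β → β ≤ γ → ∃ C > (0:ℝ), ∀ x : E, Mem γ x →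
    N β x ^ (γ - θ) ≤ C * (N θ x ^ (γ - β) * N γ x ^ (β - θ))

attribute [instance] BanachScale.inst_add BanachScale.inst_mod

/-- An analytic `C₀`-semigroup `(S(t))_{t ≥ 0}` acting on a scale of Banach spaces,
together with the standard parabolic bounds
`|(S(t) - Id)x|_η ≲ t^σ |x|_{η+σ}` and `|S(t)x|_{η+σ} ≲ t^{-σ} |x|_η` for `σ ∈ [0,1]`,
with constants uniform on compact time intervals. -/
structure ScaleSemigroup (𝓑 : BanachScale) where
  S : ℝ → 𝓑.E →ₗ[ℝ] 𝓑.E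
  S_id : ∀ x : 𝓑.E, S 0 x = x
  S_comp : ∀ s t : ℝ, 0 ≤ s → 0 ≤ t → ∀ x : 𝓑.E, S (s + t) x = S s (S t x)
  S_mem : ∀ (t θ : ℝ) (x : 𝓑.E), 0 ≤ t → 𝓑.Mem θ x → 𝓑.Mem θ (S t x)
  S_bounded : ∀ θ Tm : ℝ, 0 < Tm → ∃ C > (0:ℝ), ∀ (t : ℝ) (x : 𝓑.E), 0 ≤ t → t ≤ Tm →
    𝓑.Mem θ x → 𝓑.N θ (S t x) ≤ C * 𝓑.N θ x
  S_strong_cont : ∀ (θ : ℝ) (x : 𝓑.E), 𝓑.Mem θ x → ∀ ε > (0:ℝ), ∃ δ > (0:ℝ),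
    ∀ t : ℝ, 0 < t → t < δ → 𝓑.N θ (S t x - x) < ε
  S_smoothing : ∀ η σ Tm : ℝ, 0 ≤ σ → σ ≤ 1 → 0 < Tm → ∃ C > (0:ℝ),
    ∀ (t : ℝ) (x : 𝓑.E), 0 < t → t ≤ Tm → 𝓑.Mem η x →
      𝓑.Mem (η + σ) (S t x) ∧ 𝓑.N (η + σ) (S t x) ≤ C * t ^ (-σ) * 𝓑.N η x
  S_holdId : ∀ η σ Tm : ℝ, 0 ≤ σ → σ ≤ 1 → 0 < Tm → ∃ C > (0:ℝ),
    ∀ (t : ℝ) (x : 𝓑.E), 0 < t → t ≤ Tm → 𝓑.Mem (η + σ) x →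
      𝓑.N η (S t x - x) ≤ C * t ^ σ * 𝓑.N (η + σ) x

/-- A (one-dimensional) `α`-Hölder rough path `𝐗 = (X, X⁽²⁾)` on `[0,T]`:
`X ∈ C^α`, `X₀ = 0`, `X⁽²⁾ ∈ C^{2α}` on the simplex, satisfying Chen's relation. -/
structure RoughPath (α T : ℝ) where
  X : ℝ → ℝ
  X2 : ℝ → ℝ → ℝ
  X_zero : X 0 = 0
  holderX : ∃ C : ℝ, ∀ s t : ℝ, 0 ≤ s → s ≤ t → t ≤ T → |X t - X s| ≤ C * (t - s) ^ α
  holderX2 : ∃ C : ℝ, ∀ s t : ℝ, 0 ≤ s → s ≤ t → t ≤ T → |X2 s t| ≤ C * (t - s) ^ (2 * α)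
  chen : ∀ s u t : ℝ, 0 ≤ s → s ≤ u → u ≤ t → t ≤ T →
    X2 s t - X2 s u - X2 u t = (X u - X s) * (X t - X u)

/-- The supremum norm `‖f‖_{∞, B_θ}` over `[0,T]`. -/
noncomputable def scaleSupNorm (𝓑 : BanachScale) (θ T : ℝ) (f : ℝ → 𝓑.E) : ℝ :=
  sSup {r : ℝ | ∃ t : ℝ, 0 ≤ t ∧ t ≤ T ∧ r = 𝓑.N θ (f t)}

/-- The `η`-Hölder seminorm (in `B_θ`) of a two-parameter function on `[0,T]`. -/
noncomputable def scaleHolderNorm2 (𝓑 : BanachScale) (θ η T : ℝ) (F : ℝ → ℝ → 𝓑.E) : ℝ :=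
  sSup {r : ℝ | ∃ s t : ℝ, 0 ≤ s ∧ s < t ∧ t ≤ T ∧ r = 𝓑.N θ (F s t) / (t - s) ^ η}

/-- The `η`-Hölder seminorm `‖f‖_{η, B_θ}` over `[0,T]`. -/
noncomputable def scaleHolderNorm (𝓑 : BanachScale) (θ η T : ℝ) (f : ℝ → 𝓑.E) : ℝ :=
  scaleHolderNorm2 𝓑 θ η T fun s t => f t - f s

/-- The `η`-Hölder seminorm of a real-valued path on `[0,T]`. -/
noncomputable def realHolderNorm (η T : ℝ) (X : ℝ → ℝ) : ℝ :=
  sSup {r : ℝ | ∃ s t : ℝ, 0 ≤ s ∧ s < t ∧ t ≤ T ∧ r = |X t - X s| / (t - s) ^ η}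

/-- `f : [0,T] → B_θ` is `η`-Hölder continuous. -/
def IsHolderOn (𝓑 : BanachScale) (θ η T : ℝ) (f : ℝ → 𝓑.E) : Prop :=
  ∃ C : ℝ, ∀ s t : ℝ, 0 ≤ s → s ≤ t → t ≤ T → 𝓑.N θ (f t - f s) ≤ C * (t - s) ^ η

/-- The remainder `R^y_{s,t} = y_t - y_s - y'_s X_{s,t}` of a controlled rough path. -/
def gubRemainder (𝓑 : BanachScale) (X : ℝ → ℝ) (y y' : ℝ → 𝓑.E) (s t : ℝ) : 𝓑.E :=
  y t - y s - (X t - X s) • y' s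

/-- `(y, y')` is a controlled rough path in `D^{2α}_{X,γ}([0,T])`:
`y ∈ C([0,T]; B_γ)`, `y' ∈ C([0,T]; B_{γ-α}) ∩ C^α([0,T]; B_{γ-2α})` and the remainder
`R^y ∈ C^α([0,T]; B_{γ-α}) ∩ C^{2α}([0,T]; B_{γ-2α})`. -/
structure IsControlledPath (𝓑 : BanachScale) (α γ T : ℝ) (X : ℝ → ℝ)
    (y y' : ℝ → 𝓑.E) : Prop where
  mem_y : ∀ t : ℝ, 0 ≤ t → t ≤ T → 𝓑.Mem γ (y t)
  mem_y' : ∀ t : ℝ, 0 ≤ t → t ≤ T → 𝓑.Mem (γ - α) (y' t)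
  cont_y : ∀ t : ℝ, 0 ≤ t → t ≤ T → ∀ ε > (0:ℝ), ∃ δ > (0:ℝ), ∀ s : ℝ, 0 ≤ s → s ≤ T →
    |s - t| < δ → 𝓑.N γ (y s - y t) < ε
  cont_y' : ∀ t : ℝ, 0 ≤ t → t ≤ T → ∀ ε > (0:ℝ), ∃ δ > (0:ℝ), ∀ s : ℝ, 0 ≤ s → s ≤ T →
    |s - t| < δ → 𝓑.N (γ - α) (y' s - y' t) < ε
  holder_y' : ∃ C : ℝ, ∀ s t : ℝ, 0 ≤ s → s ≤ t → t ≤ T →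
    𝓑.N (γ - 2 * α) (y' t - y' s) ≤ C * (t - s) ^ α
  rem_alpha : ∃ C : ℝ, ∀ s t : ℝ, 0 ≤ s → s ≤ t → t ≤ T →
    𝓑.N (γ - α) (gubRemainder 𝓑 X y y' s t) ≤ C * (t - s) ^ α
  rem_two_alpha : ∃ C : ℝ, ∀ s t : ℝ, 0 ≤ s → s ≤ t → t ≤ T →
    𝓑.N (γ - 2 * α) (gubRemainder 𝓑 X y y' s t) ≤ C * (t - s) ^ (2 * α)

/-- The norm `‖(y,y')‖_{X,2α,γ}` on `D^{2α}_{X,γ}([0,T])`. -/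
noncomputable def crpNorm (𝓑 : BanachScale) (α γ T : ℝ) (X : ℝ → ℝ)
    (y y' : ℝ → 𝓑.E) : ℝ :=
  scaleSupNorm 𝓑 γ T y + scaleSupNorm 𝓑 (γ - α) T y'
    + scaleHolderNorm 𝓑 (γ - 2 * α) α T y'
    + scaleHolderNorm2 𝓑 (γ - α) α T (gubRemainder 𝓑 X y y')
    + scaleHolderNorm2 𝓑 (γ - 2 * α) (2 * α) T (gubRemainder 𝓑 X y y')

/-- A partition `a = t_0 < t_1 < ⋯ < t_n = b` of the interval `[a,b]`. -/
structure RPartition (a b : ℝ) where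
  n : ℕ
  t : ℕ → ℝ
  n_pos : 0 < n
  strict : ∀ i : ℕ, i < n → t i < t (i + 1)
  first : t 0 = a
  last : t n = b

/-- The mesh `|π|` of a partition. -/
noncomputable def RPartition.mesh {a b : ℝ} (π : RPartition a b) : ℝ :=
  sSup {r : ℝ | ∃ i : ℕ, i < π.n ∧ r = π.t (i + 1) - π.t i}

/-- The compensated Riemann sum `Σ_{[u,v] ∈ π} S(b - u)[y_u X_{u,v} + y'_u X⁽²⁾_{u,v}]`. -/
noncomputable def convRiemannSum (𝓑 : BanachScale) (Sg : ScaleSemigroup 𝓑)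
    (X : ℝ → ℝ) (X2 : ℝ → ℝ → ℝ) (y y' : ℝ → 𝓑.E) {a b : ℝ} (π : RPartition a b) : 𝓑.E :=
  ∑ i ∈ Finset.range π.n,
    Sg.S (b - π.t i)
      ((X (π.t (i + 1)) - X (π.t i)) • y (π.t i) + X2 (π.t i) (π.t (i + 1)) • y' (π.t i))

/-- `I` is the rough convolution `∫_a^b S(b-r) y_r d𝐗_r`, i.e. the limit in `B_θ` of the
compensated Riemann sums over partitions of `[a,b]` with vanishing mesh. -/
def IsRoughConvolution (𝓑 : BanachScale) (Sg : ScaleSemigroup 𝓑) (X : ℝ → ℝ)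
    (X2 : ℝ → ℝ → ℝ) (y y' : ℝ → 𝓑.E) (θ a b : ℝ) (I : 𝓑.E) : Prop :=
  𝓑.Mem θ I ∧ ∀ ε > (0:ℝ), ∃ δ > (0:ℝ), ∀ π : RPartition a b, π.mesh < δ →
    𝓑.N θ (convRiemannSum 𝓑 Sg X X2 y y' π - I) ≤ ε

/-- Left Riemann sum of a `B`-valued function. -/
noncomputable def intRiemannSum (𝓑 : BanachScale) (f : ℝ → 𝓑.E) {a b : ℝ}
    (π : RPartition a b) : 𝓑.E :=
  ∑ i ∈ Finset.range π.n, (π.t (i + 1) - π.t i) • f (π.t i)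

/-- `I = ∫_a^b f(s) ds` as a `B_θ`-valued Riemann integral. -/
def IsRiemannIntegral (𝓑 : BanachScale) (θ : ℝ) (f : ℝ → 𝓑.E) (a b : ℝ) (I : 𝓑.E) : Prop :=
  𝓑.Mem θ I ∧ ∀ ε > (0:ℝ), ∃ δ > (0:ℝ), ∀ π : RPartition a b, π.mesh < δ →
    𝓑.N θ (intRiemannSum 𝓑 f π - I) ≤ ε

/-- Assumption (F): the drift `F : B_γ → B_{γ-δ}` is locally Lipschitz continuous and
satisfies a linear growth condition. -/
structure AssumptionF (𝓑 : BanachScale) (γ δ : ℝ) (F : 𝓑.E → 𝓑.E) : Prop where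
  maps : ∀ x : 𝓑.E, 𝓑.Mem γ x → 𝓑.Mem (γ - δ) (F x)
  locLip : ∀ R > (0:ℝ), ∃ L : ℝ, ∀ x y : 𝓑.E, 𝓑.Mem γ x → 𝓑.Mem γ y →
    𝓑.N γ x ≤ R → 𝓑.N γ y ≤ R → 𝓑.N (γ - δ) (F x - F y) ≤ L * 𝓑.N γ (x - y)
  linGrowth : ∃ C : ℝ, ∀ x : 𝓑.E, 𝓑.Mem γ x → 𝓑.N (γ - δ) (F x) ≤ C * (1 + 𝓑.N γ x)

/-- Assumption (G): for `θ ∈ {0, α, 2α}` the diffusion coefficient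
`G : B_{γ-θ} → B_{γ-θ-σ}` is three times continuously (Fréchet) differentiable with bounded
derivatives `DG`, `D²G`, `D³G`, and the derivative of `x ↦ DG(x)G(x) : B_{γ-α} → B_{γ-2α-σ}`
is bounded. -/
structure AssumptionG (𝓑 : BanachScale) (α σ γ : ℝ) (G : 𝓑.E → 𝓑.E)
    (DG : 𝓑.E → 𝓑.E →ₗ[ℝ] 𝓑.E)
    (D2G : 𝓑.E → 𝓑.E →ₗ[ℝ] 𝓑.E →ₗ[ℝ] 𝓑.E)
    (D3G : 𝓑.E → 𝓑.E →ₗ[ℝ] 𝓑.E →ₗ[ℝ] 𝓑.E →ₗ[ℝ] 𝓑.E) : Prop where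
  maps : ∀ θ ∈ ({0, α, 2 * α} : Set ℝ), ∀ x : 𝓑.E, 𝓑.Mem (γ - θ) x → 𝓑.Mem (γ - θ - σ) (G x)
  DG_maps : ∀ θ ∈ ({0, α, 2 * α} : Set ℝ), ∀ x h : 𝓑.E, 𝓑.Mem (γ - θ) x → 𝓑.Mem (γ - θ) h →
    𝓑.Mem (γ - θ - σ) (DG x h)
  DG_bound : ∀ θ ∈ ({0, α, 2 * α} : Set ℝ), ∃ C : ℝ, ∀ x h : 𝓑.E, 𝓑.Mem (γ - θ) x →
    𝓑.Mem (γ - θ) h → 𝓑.N (γ - θ - σ) (DG x h) ≤ C * 𝓑.N (γ - θ) h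
  DG_isDeriv : ∀ θ ∈ ({0, α, 2 * α} : Set ℝ), ∀ x : 𝓑.E, 𝓑.Mem (γ - θ) x → ∀ ε > (0:ℝ),
    ∃ δ > (0:ℝ), ∀ h : 𝓑.E, 𝓑.Mem (γ - θ) h → 𝓑.N (γ - θ) h < δ →
      𝓑.N (γ - θ - σ) (G (x + h) - G x - DG x h) ≤ ε * 𝓑.N (γ - θ) h
  D2G_maps : ∀ θ ∈ ({0, α, 2 * α} : Set ℝ), ∀ x h k : 𝓑.E, 𝓑.Mem (γ - θ) x →
    𝓑.Mem (γ - θ) h → 𝓑.Mem (γ - θ) k → 𝓑.Mem (γ - θ - σ) (D2G x h k)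
  D2G_bound : ∀ θ ∈ ({0, α, 2 * α} : Set ℝ), ∃ C : ℝ, ∀ x h k : 𝓑.E, 𝓑.Mem (γ - θ) x →
    𝓑.Mem (γ - θ) h → 𝓑.Mem (γ - θ) k →
    𝓑.N (γ - θ - σ) (D2G x h k) ≤ C * (𝓑.N (γ - θ) h * 𝓑.N (γ - θ) k)
  D2G_isDeriv : ∀ θ ∈ ({0, α, 2 * α} : Set ℝ), ∀ x : 𝓑.E, 𝓑.Mem (γ - θ) x → ∀ ε > (0:ℝ),
    ∃ δ > (0:ℝ), ∀ h : 𝓑.E, 𝓑.Mem (γ - θ) h → 𝓑.N (γ - θ) h < δ → ∀ k : 𝓑.E,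
      𝓑.Mem (γ - θ) k →
      𝓑.N (γ - θ - σ) (DG (x + h) k - DG x k - D2G x h k) ≤ ε * (𝓑.N (γ - θ) h * 𝓑.N (γ - θ) k)
  D3G_maps : ∀ θ ∈ ({0, α, 2 * α} : Set ℝ), ∀ x h k l : 𝓑.E, 𝓑.Mem (γ - θ) x →
    𝓑.Mem (γ - θ) h → 𝓑.Mem (γ - θ) k → 𝓑.Mem (γ - θ) l → 𝓑.Mem (γ - θ - σ) (D3G x h k l)
  D3G_bound : ∀ θ ∈ ({0, α, 2 * α} : Set ℝ), ∃ C : ℝ, ∀ x h k l : 𝓑.E, 𝓑.Mem (γ - θ) x →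
    𝓑.Mem (γ - θ) h → 𝓑.Mem (γ - θ) k → 𝓑.Mem (γ - θ) l →
    𝓑.N (γ - θ - σ) (D3G x h k l) ≤ C * (𝓑.N (γ - θ) h * (𝓑.N (γ - θ) k * 𝓑.N (γ - θ) l))
  D3G_isDeriv : ∀ θ ∈ ({0, α, 2 * α} : Set ℝ), ∀ x : 𝓑.E, 𝓑.Mem (γ - θ) x → ∀ ε > (0:ℝ),
    ∃ δ > (0:ℝ), ∀ h : 𝓑.E, 𝓑.Mem (γ - θ) h → 𝓑.N (γ - θ) h < δ → ∀ k l : 𝓑.E,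
      𝓑.Mem (γ - θ) k → 𝓑.Mem (γ - θ) l →
      𝓑.N (γ - θ - σ) (D2G (x + h) k l - D2G x k l - D3G x h k l)
        ≤ ε * (𝓑.N (γ - θ) h * (𝓑.N (γ - θ) k * 𝓑.N (γ - θ) l))
  D3G_cont : ∀ θ ∈ ({0, α, 2 * α} : Set ℝ), ∀ x : 𝓑.E, 𝓑.Mem (γ - θ) x → ∀ ε > (0:ℝ),
    ∃ δ > (0:ℝ), ∀ x' : 𝓑.E, 𝓑.Mem (γ - θ) x' → 𝓑.N (γ - θ) (x' - x) < δ →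
      ∀ h k l : 𝓑.E, 𝓑.Mem (γ - θ) h → 𝓑.Mem (γ - θ) k → 𝓑.Mem (γ - θ) l →
      𝓑.N (γ - θ - σ) (D3G x' h k l - D3G x h k l)
        ≤ ε * (𝓑.N (γ - θ) h * (𝓑.N (γ - θ) k * 𝓑.N (γ - θ) l))
  DGG_deriv_bounded : ∃ (L : 𝓑.E → 𝓑.E →ₗ[ℝ] 𝓑.E) (C : ℝ),
    (∀ x h : 𝓑.E, 𝓑.Mem (γ - α) x → 𝓑.Mem (γ - α) h →
      𝓑.Mem (γ - 2 * α - σ) (L x h) ∧ 𝓑.N (γ - 2 * α - σ) (L x h) ≤ C * 𝓑.N (γ - α) h) ∧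
    ∀ x : 𝓑.E, 𝓑.Mem (γ - α) x → ∀ ε > (0:ℝ), ∃ δ > (0:ℝ), ∀ h : 𝓑.E, 𝓑.Mem (γ - α) h →
      𝓑.N (γ - α) h < δ →
      𝓑.N (γ - 2 * α - σ) (DG (x + h) (G (x + h)) - DG x (G x) - L x h) ≤ ε * 𝓑.N (γ - α) h

/-- `y` is a (mild) solution on `[0,T']` of the rough evolution equation
`dy = (Ay + F(y))dt + G(y)d𝐗`, `y(0) = y₀`: the pair `(y, G(y))` is a controlled rough
path in `D^{2α}_{X,γ}([0,T'])` and the mild formulation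
`y_t = S(t)y₀ + ∫₀ᵗ S(t-s)F(y_s)ds + ∫₀ᵗ S(t-s)G(y_s)d𝐗_s` holds, the rough convolution
being the limit of the compensated Riemann sums
`Σ S(t-u)[G(y_u)X_{u,v} + DG(y_u)G(y_u)X⁽²⁾_{u,v}]`. -/
structure IsSolution (𝓑 : BanachScale) (Sg : ScaleSemigroup 𝓑) (α γ : ℝ)
    (X : ℝ → ℝ) (X2 : ℝ → ℝ → ℝ) (F G : 𝓑.E → 𝓑.E) (DG : 𝓑.E → 𝓑.E →ₗ[ℝ] 𝓑.E)
    (y₀ : 𝓑.E) (T' : ℝ) (y : ℝ → 𝓑.E) : Prop where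
  controlled : IsControlledPath 𝓑 α γ T' X y fun t => G (y t)
  init : y 0 = y₀
  mild : ∀ t : ℝ, 0 < t → t ≤ T' → ∃ D Z : 𝓑.E,
    IsRiemannIntegral 𝓑 γ (fun s => Sg.S (t - s) (F (y s))) 0 t D ∧
    IsRoughConvolution 𝓑 Sg X X2 (fun s => G (y s)) (fun s => DG (y s) (G (y s)))
      (γ - 2 * α) 0 t Z ∧
    y t = Sg.S t y₀ + D + Z

/-- The Borel σ-algebra of `B_θ`, generated by the `|·|_θ`-balls of `B_θ`,
as a σ-algebra on the ambient space. -/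
def scaleBorel (𝓑 : BanachScale) (θ : ℝ) : MeasurableSpace 𝓑.E :=
  MeasurableSpace.generateFrom
    {s : Set 𝓑.E | ∃ (c : 𝓑.E) (r : ℝ), s = {x | 𝓑.Mem θ x ∧ 𝓑.N θ (x - c) < r}}

/-! Restarting the mild formulation at time `s` writes `y_t` as `S(t - s) y_s`, plus the drift
integral over `[s, t]`, plus the one-interval term
`S(t - s) [G(y_s) X_{s,t} + DG(y_s) G(y_s) X⁽²⁾_{s,t}]`, plus the error of that term as an
approximation of the rough integral. By linear growth, everything except the error is controlled by
`|y|_γ` alone. The sewing lemma, with a singular weight at `t` that comes from the smoothing of `S`,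
bounds the error in `B_{γ-θ}` by a multiple of `(1 + K) (t - s) ^ (θ + α - σ)`, where `K` is
proportional to the norm of `(y, G(y))`; the surplus `α - σ ≥ η` over the required power `θ` is the
source of the factor `T ^ η`. For `s = 0` and `θ = 0` the drift and the one-interval term are small
as well, which bounds `sup |y|_γ` by `1 + |y₀|_γ + T ^ η K` up to a constant. Inserting this in the
decomposition for `θ = α` and `θ = 2 α` bounds the remainder of `(y, G(y))`, and the Lipschitz bound
for `G` turns the result into a bound on the increments of `G(y)`. -/

namespace BanachScale

open Filter Topology

variable {𝓑 : BanachScale} {θ a b B : ℝ} {x y : 𝓑.E} {u v : ℕ → 𝓑.E}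

/-- The Banach space `B_θ` as a subspace of the ambient space; it carries the norm `𝓑.N θ`. -/
def space (𝓑 : BanachScale) (θ : ℝ) : Submodule ℝ 𝓑.E where
  carrier := {x | 𝓑.Mem θ x}
  add_mem' hx hy := 𝓑.mem_add θ _ _ hx hy
  zero_mem' := 𝓑.mem_zero θ
  smul_mem' c x hx := 𝓑.mem_smul θ c x hx

instance : Norm (𝓑.space θ) := ⟨fun x => 𝓑.N θ x⟩

theorem space_normedSpaceCore : NormedSpace.Core ℝ (𝓑.space θ) where
  norm_nonneg x := 𝓑.N_nonneg θ x
  norm_smul c x := 𝓑.N_smul θ c x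
  norm_triangle x y := 𝓑.N_add θ x y x.2 y.2
  norm_eq_zero_iff x :=
    ⟨fun h => Subtype.ext (𝓑.N_eq_zero θ x x.2 h), fun h => h ▸ 𝓑.N_zero θ⟩

noncomputable instance : NormedAddCommGroup (𝓑.space θ) :=
  NormedAddCommGroup.ofCore space_normedSpaceCore

noncomputable instance : NormedSpace ℝ (𝓑.space θ) :=
  NormedSpace.ofCore space_normedSpaceCore

theorem tendsto_N_sub_of_forall_lt
    (h : ∀ ε > (0 : ℝ), ∃ M : ℕ, ∀ n ≥ M, 𝓑.N θ (u n - x) < ε) :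
    Tendsto (fun n => 𝓑.N θ (u n - x)) atTop (𝓝 0) :=
  Metric.tendsto_atTop.2 fun ε hε => by
    simpa only [Real.dist_eq, sub_zero, abs_of_nonneg (𝓑.N_nonneg θ _)] using h ε hε

instance : CompleteSpace (𝓑.space θ) := by
  refine Metric.complete_of_cauchySeq_tendsto fun u hu => ?_
  obtain ⟨x, hx, hux⟩ := 𝓑.complete θ (fun n => u n) (fun n => (u n).2) fun ε hε => by
    obtain ⟨M, hM⟩ := Metric.cauchySeq_iff.1 hu ε hε
    exact ⟨M, fun m hm n hn => (dist_eq_norm (u m) (u n)).symm.trans_lt (hM m hm n hn)⟩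
  exact ⟨⟨x, hx⟩, tendsto_iff_norm_sub_tendsto_zero.2 (tendsto_N_sub_of_forall_lt hux)⟩

theorem mem_sub (hx : 𝓑.Mem θ x) (hy : 𝓑.Mem θ y) : 𝓑.Mem θ (x - y) :=
  (𝓑.space θ).sub_mem hx hy

theorem N_sub_le (hx : 𝓑.Mem θ x) (hy : 𝓑.Mem θ y) : 𝓑.N θ (x - y) ≤ 𝓑.N θ x + 𝓑.N θ y :=
  norm_sub_le (⟨x, hx⟩ : 𝓑.space θ) ⟨y, hy⟩

theorem N_smul_add_smul_le (hx : 𝓑.Mem θ x) (hy : 𝓑.Mem θ y) (p q : ℝ) :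
    𝓑.N θ (p • x + q • y) ≤ |p| * 𝓑.N θ x + |q| * 𝓑.N θ y := by
  simpa only [𝓑.N_smul] using 𝓑.N_add θ _ _ (𝓑.mem_smul θ p x hx) (𝓑.mem_smul θ q y hy)

theorem N_le_N_sub_add (hx : 𝓑.Mem θ x) (hy : 𝓑.Mem θ y) :
    𝓑.N θ x ≤ 𝓑.N θ (x - y) + 𝓑.N θ y :=
  norm_le_norm_sub_add (⟨x, hx⟩ : 𝓑.space θ) ⟨y, hy⟩

theorem exists_N_le_of_le (𝓑 : BanachScale) (hab : a ≤ b) :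
    ∃ C > 0, ∀ x, 𝓑.Mem b x → 𝓑.Mem a x ∧ 𝓑.N a x ≤ C * 𝓑.N b x :=
  let ⟨C, hC, h⟩ := 𝓑.embed_bound hab
  ⟨C, hC, fun x hx => ⟨𝓑.mem_mono hab x hx, h x hx⟩⟩

open Classical in
/-- The inverse of the inclusion `B_θ ⊆ E`, with the value `0` off `B_θ`. It transfers results on
Banach spaces to `E`-valued functions whose values are only known to lie in `B_θ` part of the
time. -/
noncomputable def lift (𝓑 : BanachScale) (θ : ℝ) (x : 𝓑.E) : 𝓑.space θ :=
  if hx : 𝓑.Mem θ x then ⟨x, hx⟩ else 0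

theorem coe_lift (hx : 𝓑.Mem θ x) : (𝓑.lift θ x : 𝓑.E) = x := by
  simp [lift, hx]

theorem norm_lift (hx : 𝓑.Mem θ x) : ‖𝓑.lift θ x‖ = 𝓑.N θ x :=
  congrArg (𝓑.N θ) (coe_lift hx)

/-- Convergence of a sequence of elements of `B_θ` in the norm of `B_θ`. -/
structure TendstoIn (𝓑 : BanachScale) (θ : ℝ) (u : ℕ → 𝓑.E) (x : 𝓑.E) : Prop where
  mem_seq : ∀ n, 𝓑.Mem θ (u n)
  mem_lim : 𝓑.Mem θ x
  tendsto_N : Tendsto (fun n => 𝓑.N θ (u n - x)) atTop (𝓝 0)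

namespace TendstoIn

theorem tendsto_space (h : TendstoIn 𝓑 θ u x) :
    Tendsto (fun n => (⟨u n, h.mem_seq n⟩ : 𝓑.space θ)) atTop (𝓝 ⟨x, h.mem_lim⟩) :=
  tendsto_iff_norm_sub_tendsto_zero.2 h.tendsto_N

theorem of_tendsto_space {w : ℕ → 𝓑.space θ} {z : 𝓑.space θ} (h : Tendsto w atTop (𝓝 z)) :
    TendstoIn 𝓑 θ (fun n => w n) z where
  mem_seq n := (w n).2
  mem_lim := z.2
  tendsto_N := tendsto_iff_norm_sub_tendsto_zero.1 h

theorem sub (hu : TendstoIn 𝓑 θ u x) (hv : TendstoIn 𝓑 θ v y) :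
    TendstoIn 𝓑 θ (fun n => u n - v n) (x - y) :=
  of_tendsto_space (hu.tendsto_space.sub hv.tendsto_space)

theorem unique (hx : TendstoIn 𝓑 θ u x) (hy : TendstoIn 𝓑 θ u y) : x = y :=
  congrArg Subtype.val (tendsto_nhds_unique hx.tendsto_space hy.tendsto_space)

theorem norm_le (h : TendstoIn 𝓑 θ u x) (hB : ∀ n, 𝓑.N θ (u n) ≤ B) : 𝓑.N θ x ≤ B :=
  le_of_tendsto' h.tendsto_space.norm hB

theorem map {A : 𝓑.E →ₗ[ℝ] 𝓑.E} {C : ℝ}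
    (hA : ∀ x, 𝓑.Mem a x → 𝓑.Mem b (A x) ∧ 𝓑.N b (A x) ≤ C * 𝓑.N a x)
    (h : TendstoIn 𝓑 a u x) : TendstoIn 𝓑 b (fun n => A (u n)) (A x) where
  mem_seq n := (hA _ (h.mem_seq n)).1
  mem_lim := (hA _ h.mem_lim).1
  tendsto_N := squeeze_zero (fun n => 𝓑.N_nonneg _ _)
    (fun n => by simpa only [map_sub] using (hA _ (mem_sub (h.mem_seq n) h.mem_lim)).2)
    (by simpa using h.tendsto_N.const_mul C)

theorem mono (hab : a ≤ b) (h : TendstoIn 𝓑 b u x) : TendstoIn 𝓑 a u x :=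
  let ⟨_, _, hC⟩ := 𝓑.exists_N_le_of_le hab
  h.map (A := LinearMap.id) hC

end TendstoIn

end BanachScale

namespace BanachScale

variable {𝓑 : BanachScale} {a b b' : ℝ} {f : 𝓑.E → 𝓑.E} {L : 𝓑.E → 𝓑.E →ₗ[ℝ] 𝓑.E}

/-- `f` maps `B_a` to `B_b` and grows at most linearly. -/
structure HasLinearGrowth (𝓑 : BanachScale) (a b : ℝ) (f : 𝓑.E → 𝓑.E) : Prop where
  maps : ∀ x, 𝓑.Mem a x → 𝓑.Mem b (f x)
  exists_bound : ∃ C > 0, ∀ x, 𝓑.Mem a x → 𝓑.N b (f x) ≤ C * (1 + 𝓑.N a x)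

/-- `f : B_a → B_b` is Fréchet differentiable with derivative `L`, and `L` is bounded as a map
from `B_a` to the bounded operators from `B_a` to `B_b`. -/
structure HasBoundedDeriv (𝓑 : BanachScale) (a b : ℝ) (f : 𝓑.E → 𝓑.E)
    (L : 𝓑.E → 𝓑.E →ₗ[ℝ] 𝓑.E) : Prop where
  maps : ∀ x, 𝓑.Mem a x → 𝓑.Mem b (f x)
  deriv_maps : ∀ x h, 𝓑.Mem a x → 𝓑.Mem a h → 𝓑.Mem b (L x h)
  deriv_bound : ∃ C > 0, ∀ x h, 𝓑.Mem a x → 𝓑.Mem a h → 𝓑.N b (L x h) ≤ C * 𝓑.N a h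
  isDeriv : ∀ x, 𝓑.Mem a x → ∀ ε > (0 : ℝ), ∃ δ > (0 : ℝ), ∀ h, 𝓑.Mem a h → 𝓑.N a h < δ →
    𝓑.N b (f (x + h) - f x - L x h) ≤ ε * 𝓑.N a h

theorem HasLinearGrowth.mono_right (hf : HasLinearGrowth 𝓑 a b f) (hb : b' ≤ b) :
    HasLinearGrowth 𝓑 a b' f := by
  obtain ⟨C, hC, hfC⟩ := hf.exists_bound
  obtain ⟨C', hC', hemb⟩ := 𝓑.exists_N_le_of_le hb
  refine ⟨fun x hx => (hemb _ (hf.maps x hx)).1, C' * C, by positivity, fun x hx => ?_⟩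
  calc 𝓑.N b' (f x) ≤ C' * 𝓑.N b (f x) := (hemb _ (hf.maps x hx)).2
    _ ≤ C' * (C * (1 + 𝓑.N a x)) := by gcongr; exact hfC x hx
    _ = C' * C * (1 + 𝓑.N a x) := by ring

namespace HasBoundedDeriv

/-- The map between Banach spaces underlying a differentiable map on the scale. -/
def toFun (hf : HasBoundedDeriv 𝓑 a b f L) (x : 𝓑.space a) : 𝓑.space b :=
  ⟨f x, hf.maps x x.2⟩

/-- The derivative as a continuous linear map from `B_a` to `B_b`. -/
noncomputable def derivCLM (hf : HasBoundedDeriv 𝓑 a b f L) (x : 𝓑.space a) :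
    𝓑.space a →L[ℝ] 𝓑.space b :=
  ((L x).restrict fun h hh => hf.deriv_maps x h x.2 hh).mkContinuousOfExistsBound
    (let ⟨C, _, hC⟩ := hf.deriv_bound; ⟨C, fun h => hC x h x.2 h.2⟩)

theorem hasFDerivAt (hf : HasBoundedDeriv 𝓑 a b f L) (x : 𝓑.space a) :
    HasFDerivAt hf.toFun (hf.derivCLM x) x := by
  refine hasFDerivAt_iff_isLittleO_nhds_zero.2 (Asymptotics.isLittleO_iff.2 fun ε hε => ?_)
  obtain ⟨δ, hδ, h⟩ := hf.isDeriv x x.2 ε hε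
  filter_upwards [Metric.ball_mem_nhds 0 hδ] with k hk
  exact h k k.2 (mem_ball_zero_iff.1 hk)

theorem N_sub_sub_le {B : ℝ} {x z c : 𝓑.E} (hf : HasBoundedDeriv 𝓑 a b f L) (hx : 𝓑.Mem a x)
    (hz : 𝓑.Mem a z) (hc : 𝓑.Mem b c)
    (hB : ∀ r ∈ Icc (0 : ℝ) 1, 𝓑.N b (L (z + r • (x - z)) (x - z) - c) ≤ B) :
    𝓑.N b (f x - f z - c) ≤ B := by
  let z' : 𝓑.space a := ⟨z, hz⟩
  let v : 𝓑.space a := ⟨x, hx⟩ - z'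
  let c' : 𝓑.space b := ⟨c, hc⟩
  have hderiv (r : ℝ) : HasDerivAt (fun r : ℝ => hf.toFun (z' + r • v) - r • c')
      (hf.derivCLM (z' + r • v) v - c') r := by
    have hline : HasDerivAt (fun r : ℝ => z' + r • v) v r := by
      simpa using ((hasDerivAt_id r).smul_const v).const_add z'
    have hlin : HasDerivAt (fun r : ℝ => r • c') c' r := by
      simpa using (hasDerivAt_id r).smul_const c'
    exact ((hf.hasFDerivAt _).comp_hasDerivAt r hline).sub hlin
  have hseg := norm_image_sub_le_of_norm_deriv_le_segment_01'
    (fun r _ => (hderiv r).hasDerivWithinAt) fun r hr => hB r ⟨hr.1, hr.2.le⟩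
  have hends : hf.toFun (z' + (1 : ℝ) • v) - (1 : ℝ) • c' - (hf.toFun (z' + (0 : ℝ) • v)
      - (0 : ℝ) • c') = ⟨f x - f z - c, mem_sub (mem_sub (hf.maps x hx) (hf.maps z hz)) hc⟩ := by
    simp only [one_smul, zero_smul, add_zero, sub_zero, v, add_sub_cancel]
    exact sub_right_comm _ _ _
  rwa [hends] at hseg

theorem exists_N_sub_le (hf : HasBoundedDeriv 𝓑 a b f L) :
    ∃ C > 0, ∀ x z, 𝓑.Mem a x → 𝓑.Mem a z → 𝓑.N b (f x - f z) ≤ C * 𝓑.N a (x - z) := by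
  obtain ⟨C, hC, hL⟩ := hf.deriv_bound
  refine ⟨C, hC, fun x z hx hz => ?_⟩
  simpa using hf.N_sub_sub_le hx hz (𝓑.mem_zero b) fun r _ => by
    simpa using hL _ _ (𝓑.mem_add _ _ _ hz (𝓑.mem_smul _ r _ (mem_sub hx hz))) (mem_sub hx hz)

theorem hasLinearGrowth (hf : HasBoundedDeriv 𝓑 a b f L) : HasLinearGrowth 𝓑 a b f := by
  obtain ⟨C, hC, hlip⟩ := hf.exists_N_sub_le
  refine ⟨hf.maps, max C (𝓑.N b (f 0)), lt_max_of_lt_left hC, fun x hx => ?_⟩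
  have h0 := 𝓑.mem_zero a
  calc 𝓑.N b (f x) ≤ 𝓑.N b (f x - f 0) + 𝓑.N b (f 0) :=
        N_le_N_sub_add (hf.maps x hx) (hf.maps 0 h0)
    _ ≤ C * 𝓑.N a x + 𝓑.N b (f 0) := by simpa using hlip x 0 hx h0
    _ ≤ max C (𝓑.N b (f 0)) * (1 + 𝓑.N a x) := by
        linarith [mul_le_mul_of_nonneg_right (le_max_left C (𝓑.N b (f 0))) (𝓑.N_nonneg a x),
          le_max_right C (𝓑.N b (f 0))]

end HasBoundedDeriv

end BanachScale

theorem AssumptionF.hasLinearGrowth {𝓑 : BanachScale} {γ δ : ℝ} {F : 𝓑.E → 𝓑.E}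
    (hF : AssumptionF 𝓑 γ δ F) : 𝓑.HasLinearGrowth γ (γ - δ) F := by
  obtain ⟨C, hC⟩ := hF.linGrowth
  refine ⟨hF.maps, max C 1, lt_max_of_lt_right one_pos, fun x hx => (hC x hx).trans ?_⟩
  have := 𝓑.N_nonneg γ x
  gcongr
  exact le_max_left C 1

/-- The part of assumption (G) that the a-priori estimate rests on: `G` is `C¹` with bounded
derivative on the three levels `θ ∈ {0, α, 2α}`, and so is `x ↦ DG(x)G(x)`. -/
structure IsC1Diffusion (𝓑 : BanachScale) (α σ γ : ℝ) (G : 𝓑.E → 𝓑.E)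
    (DG : 𝓑.E → 𝓑.E →ₗ[ℝ] 𝓑.E) : Prop where
  hasBoundedDeriv : ∀ θ ∈ ({0, α, 2 * α} : Set ℝ),
    𝓑.HasBoundedDeriv (γ - θ) (γ - θ - σ) G DG
  exists_hasBoundedDeriv_deriv_apply :
    ∃ L, 𝓑.HasBoundedDeriv (γ - α) (γ - 2 * α - σ) (fun x => DG x (G x)) L

theorem AssumptionG.isC1Diffusion {𝓑 : BanachScale} {α σ γ : ℝ} {G : 𝓑.E → 𝓑.E}
    {DG : 𝓑.E → 𝓑.E →ₗ[ℝ] 𝓑.E} {D2G : 𝓑.E → 𝓑.E →ₗ[ℝ] 𝓑.E →ₗ[ℝ] 𝓑.E}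
    {D3G : 𝓑.E → 𝓑.E →ₗ[ℝ] 𝓑.E →ₗ[ℝ] 𝓑.E →ₗ[ℝ] 𝓑.E} (hα : 0 ≤ α) (hσα : σ ≤ α)
    (hG : AssumptionG 𝓑 α σ γ G DG D2G D3G) : IsC1Diffusion 𝓑 α σ γ G DG where
  hasBoundedDeriv θ hθ :=
    { maps := hG.maps θ hθ
      deriv_maps := hG.DG_maps θ hθ
      deriv_bound := by
        obtain ⟨C, hC⟩ := hG.DG_bound θ hθ
        refine ⟨max C 1, lt_max_of_lt_right one_pos, fun x h hx hh => (hC x h hx hh).trans ?_⟩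
        exact mul_le_mul_of_nonneg_right (le_max_left C 1) (𝓑.N_nonneg _ h)
      isDeriv := hG.DG_isDeriv θ hθ }
  exists_hasBoundedDeriv_deriv_apply := by
    obtain ⟨L, C, hL, hderiv⟩ := hG.DGG_deriv_bounded
    refine ⟨L, ?_, fun x h hx hh => (hL x h hx hh).1, ?_, hderiv⟩
    · exact fun x hx => hG.DG_maps (2 * α) (by simp) x _ (𝓑.mem_mono (by linarith) _ hx)
        (𝓑.mem_mono (by linarith) _ (hG.maps α (by simp) x hx))
    · refine ⟨max C 1, lt_max_of_lt_right one_pos, fun x h hx hh => (hL x h hx hh).2.trans ?_⟩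
      exact mul_le_mul_of_nonneg_right (le_max_left C 1) (𝓑.N_nonneg _ h)

namespace IsC1Diffusion

open BanachScale

variable {𝓑 : BanachScale} {α σ γ : ℝ} {G : 𝓑.E → 𝓑.E} {DG : 𝓑.E → 𝓑.E →ₗ[ℝ] 𝓑.E}

theorem hasLinearGrowth (hG : IsC1Diffusion 𝓑 α σ γ G DG) : 𝓑.HasLinearGrowth γ (γ - σ) G := by
  simpa using (hG.hasBoundedDeriv 0 (by simp)).hasLinearGrowth

theorem hasLinearGrowth_deriv_apply (hσα : σ ≤ α) (hα : 0 ≤ α)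
    (hG : IsC1Diffusion 𝓑 α σ γ G DG) :
    𝓑.HasLinearGrowth γ (γ - α - σ) fun x => DG x (G x) := by
  have hDG := hG.hasBoundedDeriv α (by simp)
  have hGα : 𝓑.HasLinearGrowth γ (γ - α) G := hG.hasLinearGrowth.mono_right (by linarith)
  have hmem {x : 𝓑.E} (hx : 𝓑.Mem γ x) : 𝓑.Mem (γ - α) x := 𝓑.mem_mono (by linarith) x hx
  obtain ⟨C, hC, hDGC⟩ := hDG.deriv_bound
  obtain ⟨C', hC', hGC'⟩ := hGα.exists_bound
  refine ⟨fun x hx => hDG.deriv_maps x _ (hmem hx) (hGα.maps x hx), C * C', by positivity,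
    fun x hx => ?_⟩
  calc 𝓑.N (γ - α - σ) (DG x (G x)) ≤ C * 𝓑.N (γ - α) (G x) :=
        hDGC x _ (hmem hx) (hGα.maps x hx)
    _ ≤ C * (C' * (1 + 𝓑.N γ x)) := by gcongr; exact hGC' x hx
    _ = C * C' * (1 + 𝓑.N γ x) := by ring

/-- The difference of the derivatives is tested on `G z` only, so that boundedness of the
derivative of `x ↦ DG x (G x)` replaces a Lipschitz condition on `DG`. -/
theorem exists_N_deriv_sub_apply_le (hσα : σ ≤ α) (hα : 0 ≤ α)
    (hG : IsC1Diffusion 𝓑 α σ γ G DG) :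
    ∃ C > 0, ∀ w z, 𝓑.Mem (γ - α) w → 𝓑.Mem (γ - α) z →
      𝓑.Mem (γ - 2 * α - σ) (DG w (G z) - DG z (G z)) ∧
      𝓑.N (γ - 2 * α - σ) (DG w (G z) - DG z (G z)) ≤ C * 𝓑.N (γ - α) (w - z) := by
  have hDG := hG.hasBoundedDeriv (2 * α) (by simp)
  have hGα := hG.hasBoundedDeriv α (by simp)
  obtain ⟨L, hDGG⟩ := hG.exists_hasBoundedDeriv_deriv_apply
  obtain ⟨C₁, hC₁, hlipDGG⟩ := hDGG.exists_N_sub_le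
  obtain ⟨C₂, hC₂, hDGC⟩ := hDG.deriv_bound
  obtain ⟨C₃, hC₃, hlipG⟩ := hGα.exists_N_sub_le
  obtain ⟨C₄, hC₄, hemb⟩ := 𝓑.exists_N_le_of_le (show γ - 2 * α ≤ γ - α - σ by linarith)
  refine ⟨C₁ + C₂ * (C₄ * C₃), by positivity, fun w z hw hz => ?_⟩
  have hw' : 𝓑.Mem (γ - 2 * α) w := 𝓑.mem_mono (by linarith) w hw
  obtain ⟨hΔ, hΔN⟩ := hemb (G w - G z) (mem_sub (hGα.maps w hw) (hGα.maps z hz))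
  have hsplit : DG w (G z) - DG z (G z) = DG w (G w) - DG z (G z) - DG w (G w - G z) := by
    rw [map_sub]; abel
  have hmem := mem_sub (hDGG.maps w hw) (hDGG.maps z hz)
  rw [hsplit]
  refine ⟨mem_sub hmem (hDG.deriv_maps w _ hw' hΔ), ?_⟩
  calc 𝓑.N (γ - 2 * α - σ) (DG w (G w) - DG z (G z) - DG w (G w - G z))
    _ ≤ 𝓑.N (γ - 2 * α - σ) (DG w (G w) - DG z (G z))
        + 𝓑.N (γ - 2 * α - σ) (DG w (G w - G z)) :=
      N_sub_le hmem (hDG.deriv_maps w _ hw' hΔ)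
    _ ≤ C₁ * 𝓑.N (γ - α) (w - z) + C₂ * (C₄ * (C₃ * 𝓑.N (γ - α) (w - z))) := by
      gcongr
      · exact hlipDGG w z hw hz
      · refine (hDGC w _ hw' hΔ).trans ?_
        gcongr
        exact hΔN.trans (by gcongr; exact hlipG w z hw hz)
    _ = (C₁ + C₂ * (C₄ * C₃)) * 𝓑.N (γ - α) (w - z) := by ring

/-- Along the segment from `z` to `x` one has
`DG(w)(x - z) - ξ DG(z)G(z) = DG(w)(x - z - ξ G(z)) + ξ (DG(w) - DG(z))G(z)`. -/
theorem exists_N_remainder_le (hσα : σ ≤ α) (hα : 0 ≤ α) (hG : IsC1Diffusion 𝓑 α σ γ G DG) :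
    ∃ C > 0, ∀ (ξ : ℝ) (x z : 𝓑.E), 𝓑.Mem (γ - α) x → 𝓑.Mem (γ - α) z →
      𝓑.N (γ - 2 * α - σ) (G x - G z - ξ • DG z (G z)) ≤
        C * (𝓑.N (γ - 2 * α) (x - z - ξ • G z) + |ξ| * 𝓑.N (γ - α) (x - z)) := by
  have hDG := hG.hasBoundedDeriv (2 * α) (by simp)
  have hGα := hG.hasBoundedDeriv α (by simp)
  obtain ⟨L, hDGG⟩ := hG.exists_hasBoundedDeriv_deriv_apply
  obtain ⟨C₁, hC₁, hDGC⟩ := hDG.deriv_bound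
  obtain ⟨C₂, hC₂, hvar⟩ := hG.exists_N_deriv_sub_apply_le hσα hα
  refine ⟨C₁ + C₂, by positivity, fun ξ x z hx hz => ?_⟩
  have low {w : 𝓑.E} (hw : 𝓑.Mem (γ - α) w) : 𝓑.Mem (γ - 2 * α) w :=
    𝓑.mem_mono (by linarith) w hw
  have hGz : 𝓑.Mem (γ - 2 * α) (G z) := 𝓑.mem_mono (by linarith) _ (hGα.maps z hz)
  have hR : 𝓑.Mem (γ - 2 * α) (x - z - ξ • G z) :=
    mem_sub (low (mem_sub hx hz)) (𝓑.mem_smul _ _ _ hGz)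
  refine hDG.N_sub_sub_le (low hx) (low hz) (𝓑.mem_smul _ _ _ (hDGG.maps z hz)) fun r hr => ?_
  set w := z + r • (x - z) with hw_def
  have hw : 𝓑.Mem (γ - α) w := 𝓑.mem_add _ _ _ hz (𝓑.mem_smul _ _ _ (mem_sub hx hz))
  have hwz : 𝓑.N (γ - α) (w - z) ≤ 𝓑.N (γ - α) (x - z) := by
    rw [hw_def, add_sub_cancel_left, 𝓑.N_smul, abs_of_nonneg hr.1]
    exact mul_le_of_le_one_left (𝓑.N_nonneg _ _) hr.2
  have hsplit : DG w (x - z) - ξ • DG z (G z)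
      = DG w (x - z - ξ • G z) + ξ • (DG w (G z) - DG z (G z)) := by
    rw [map_sub _ (x - z), map_smul, smul_sub]; abel
  have hN := 𝓑.N_nonneg (γ - α) (x - z)
  rw [hsplit]
  calc _ ≤ 𝓑.N (γ - 2 * α - σ) (DG w (x - z - ξ • G z))
        + 𝓑.N (γ - 2 * α - σ) (ξ • (DG w (G z) - DG z (G z))) :=
      𝓑.N_add _ _ _ (hDG.deriv_maps w _ (low hw) hR) (𝓑.mem_smul _ _ _ (hvar w z hw hz).1)
    _ ≤ C₁ * 𝓑.N (γ - 2 * α) (x - z - ξ • G z) + |ξ| * (C₂ * 𝓑.N (γ - α) (x - z)) := by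
      rw [𝓑.N_smul]
      gcongr
      · exact hDGC w _ (low hw) hR
      · exact (hvar w z hw hz).2.trans (by gcongr)
    _ ≤ (C₁ + C₂) * (𝓑.N (γ - 2 * α) (x - z - ξ • G z) + |ξ| * 𝓑.N (γ - α) (x - z)) := by
      have := 𝓑.N_nonneg (γ - 2 * α) (x - z - ξ • G z)
      have : 0 ≤ |ξ| * 𝓑.N (γ - α) (x - z) := by positivity
      nlinarith

end IsC1Diffusion

namespace RPartition

open Filter Topology

variable {a b c : ℝ} {V W : Type*} [AddCommMonoid V] [AddCommMonoid W]

theorem monotoneOn (π : RPartition a b) : MonotoneOn π.t (Iic π.n) := by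
  intro i _ j hj hij
  induction j, hij using Nat.le_induction with
  | base => exact le_rfl
  | succ j _ ih => exact (ih (Nat.le_of_succ_le hj)).trans (π.strict j hj).le

theorem left_le (π : RPartition a b) {i : ℕ} (hi : i ≤ π.n) : a ≤ π.t i :=
  π.first.symm.trans_le (π.monotoneOn (mem_Iic.2 π.n.zero_le) hi i.zero_le)

theorem le_right (π : RPartition a b) {i : ℕ} (hi : i ≤ π.n) : π.t i ≤ b :=
  (π.monotoneOn hi (mem_Iic.2 le_rfl) hi).trans_eq π.last

theorem gap_le_mesh (π : RPartition a b) {i : ℕ} (hi : i < π.n) :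
    π.t (i + 1) - π.t i ≤ π.mesh := by
  refine le_csSup (Set.Finite.bddAbove ?_) ⟨i, hi, rfl⟩
  refine ((finite_Iio π.n).image fun i => π.t (i + 1) - π.t i).subset ?_
  rintro _ ⟨i, hi, rfl⟩
  exact ⟨i, hi, rfl⟩

theorem mesh_le (π : RPartition a b) {L : ℝ} (h : ∀ i < π.n, π.t (i + 1) - π.t i ≤ L) :
    π.mesh ≤ L := by
  refine csSup_le ⟨_, 0, π.n_pos, rfl⟩ ?_
  rintro _ ⟨i, hi, rfl⟩
  exact h i hi

theorem mesh_nonneg (π : RPartition a b) : 0 ≤ π.mesh :=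
  (sub_nonneg.2 (π.strict 0 π.n_pos).le).trans (π.gap_le_mesh π.n_pos)

/-- The Riemann-type sum `∑_{[u,v] ∈ π} Φ u v` of a two-parameter function. -/
def sum (π : RPartition a b) (Φ : ℝ → ℝ → V) : V :=
  ∑ i ∈ Finset.range π.n, Φ (π.t i) (π.t (i + 1))

theorem sum_congr (π : RPartition a b) {Φ Ψ : ℝ → ℝ → V}
    (h : ∀ u v, a ≤ u → u < v → v ≤ b → Φ u v = Ψ u v) : π.sum Φ = π.sum Ψ :=
  Finset.sum_congr rfl fun i hi =>
    have hi' := Finset.mem_range.1 hi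
    h _ _ (π.left_le hi'.le) (π.strict i hi') (π.le_right hi')

theorem map_sum (π : RPartition a b) {A : Type*} [FunLike A V W] [AddMonoidHomClass A V W]
    (f : A) (Φ : ℝ → ℝ → V) : f (π.sum Φ) = π.sum fun u v => f (Φ u v) :=
  _root_.map_sum f _ _

theorem sum_sub {V : Type*} [AddCommGroup V] (π : RPartition a b) (Φ Ψ : ℝ → ℝ → V) :
    (π.sum fun u v => Φ u v - Ψ u v) = π.sum Φ - π.sum Ψ :=
  Finset.sum_sub_distrib _ _

theorem norm_sum_le_sub {V : Type*} [SeminormedAddCommGroup V] (π : RPartition a b)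
    {Φ : ℝ → ℝ → V} {ψ : ℝ → ℝ}
    (h : ∀ u v, a ≤ u → u < v → v ≤ b → v - u ≤ π.mesh → ‖Φ u v‖ ≤ ψ u - ψ v) :
    ‖π.sum Φ‖ ≤ ψ a - ψ b :=
  calc ‖π.sum Φ‖
    _ ≤ ∑ i ∈ Finset.range π.n, (ψ (π.t i) - ψ (π.t (i + 1))) :=
      norm_sum_le_of_le _ fun i hi =>
        have hi' := Finset.mem_range.1 hi
        h _ _ (π.left_le hi'.le) (π.strict i hi') (π.le_right hi') (π.gap_le_mesh hi')
    _ = ψ a - ψ b := by rw [Finset.sum_range_sub' fun i => ψ (π.t i), π.first, π.last]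

/-- The partition of `[a, c]` that consists of the points of a partition of `[a, b]` followed by
those of a partition of `[b, c]`. -/
def append (π₁ : RPartition a b) (π₂ : RPartition b c) : RPartition a c where
  n := π₁.n + π₂.n
  t i := if i ≤ π₁.n then π₁.t i else π₂.t (i - π₁.n)
  n_pos := Nat.add_pos_left π₁.n_pos _
  strict i hi := by
    rcases lt_trichotomy i π₁.n with h | rfl | h
    · rw [if_pos h.le, if_pos (show i + 1 ≤ π₁.n from h)]
      exact π₁.strict i h
    · simpa [π₁.last, ← π₂.first] using π₂.strict 0 π₂.n_pos
    · rw [if_neg h.not_ge, if_neg (h.trans i.lt_succ_self).not_ge, Nat.succ_sub h.le]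
      exact π₂.strict _ (by omega)
  first := by simp [π₁.first]
  last := by simp [π₂.n_pos.ne', π₂.last]

theorem append_t_of_le (π₁ : RPartition a b) (π₂ : RPartition b c) {i : ℕ} (hi : i ≤ π₁.n) :
    (π₁.append π₂).t i = π₁.t i :=
  if_pos hi

theorem append_t_add (π₁ : RPartition a b) (π₂ : RPartition b c) (i : ℕ) :
    (π₁.append π₂).t (π₁.n + i) = π₂.t i := by
  rcases i.eq_zero_or_pos with rfl | hi
  · rw [add_zero, append_t_of_le _ _ le_rfl, π₁.last, π₂.first]
  · simp [append, hi.ne']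

theorem sum_append (π₁ : RPartition a b) (π₂ : RPartition b c) (Φ : ℝ → ℝ → V) :
    (π₁.append π₂).sum Φ = π₁.sum Φ + π₂.sum Φ := by
  refine (Finset.sum_range_add _ π₁.n π₂.n).trans (congrArg₂ _ ?_ ?_)
  · refine Finset.sum_congr rfl fun i hi => ?_
    have hi' := Finset.mem_range.1 hi
    rw [append_t_of_le _ _ hi'.le, append_t_of_le _ _ hi']
  · exact Finset.sum_congr rfl fun i _ => by rw [add_assoc, append_t_add, append_t_add]

theorem mesh_append_le (π₁ : RPartition a b) (π₂ : RPartition b c) :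
    (π₁.append π₂).mesh ≤ max π₁.mesh π₂.mesh := by
  refine mesh_le _ fun i (hi : i < π₁.n + π₂.n) => ?_
  rcases lt_or_ge i π₁.n with h | h
  · rw [append_t_of_le _ _ h.le, append_t_of_le _ _ h]
    exact le_max_of_le_left (π₁.gap_le_mesh h)
  · obtain ⟨k, rfl⟩ := Nat.exists_eq_add_of_le h
    rw [add_assoc, append_t_add, append_t_add]
    exact le_max_of_le_right (π₂.gap_le_mesh (by omega))

/-- The partition of `[a, b]` into `2 ^ n` intervals of equal length. -/
noncomputable def dyadic (hab : a < b) (n : ℕ) : RPartition a b where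
  n := 2 ^ n
  t i := a + i * ((b - a) / 2 ^ n)
  n_pos := by positivity
  strict i _ := by
    have : 0 < (b - a) / 2 ^ n := div_pos (sub_pos.2 hab) (by positivity)
    push_cast
    linarith
  first := by simp
  last := by push_cast; field_simp; ring

theorem dyadic_t (hab : a < b) (n i : ℕ) :
    (dyadic hab n).t i = a + i * ((b - a) / 2 ^ n) :=
  rfl

theorem dyadic_t_succ (hab : a < b) (n i : ℕ) :
    (dyadic hab n).t (i + 1) = (dyadic hab n).t i + (b - a) / 2 ^ n := by
  rw [dyadic_t, dyadic_t]; push_cast; ring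

theorem mesh_dyadic_le (hab : a < b) (n : ℕ) : (dyadic hab n).mesh ≤ (b - a) / 2 ^ n :=
  mesh_le _ fun i _ => (sub_eq_of_eq_add' (dyadic_t_succ hab n i)).le

theorem tendsto_mesh_dyadic (hab : a < b) :
    Tendsto (fun n => (dyadic hab n).mesh) atTop (𝓝 0) := by
  refine squeeze_zero (fun n => mesh_nonneg _) (mesh_dyadic_le hab) ?_
  simpa [div_eq_mul_inv] using
    (tendsto_pow_atTop_nhds_zero_of_lt_one (r := (2 : ℝ)⁻¹) (by norm_num) (by norm_num)).const_mul
      (b - a)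

theorem sum_dyadic_zero (hab : a < b) (Φ : ℝ → ℝ → V) : (dyadic hab 0).sum Φ = Φ a b := by
  simp [sum, dyadic]

theorem sum_dyadic_succ (hab : a < b) (n : ℕ) (Φ : ℝ → ℝ → V) :
    (dyadic hab (n + 1)).sum Φ = (dyadic hab n).sum fun u v =>
      Φ u ((u + v) / 2) + Φ ((u + v) / 2) v := by
  have sum_range_two_mul (f : ℕ → V) (N : ℕ) : ∑ i ∈ Finset.range (2 * N), f i
      = ∑ i ∈ Finset.range N, (f (2 * i) + f (2 * i + 1)) := by
    induction N with
    | zero => simp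
    | succ N ih => rw [Finset.sum_range_succ _ N, ← ih, mul_add_one, Finset.sum_range_succ,
        Finset.sum_range_succ, add_assoc]
  have heven (i : ℕ) : (dyadic hab (n + 1)).t (2 * i) = (dyadic hab n).t i := by
    rw [dyadic_t, dyadic_t, pow_succ]; push_cast; field_simp
  have hodd (i : ℕ) : (dyadic hab (n + 1)).t (2 * i + 1)
      = ((dyadic hab n).t i + (dyadic hab n).t (i + 1)) / 2 := by
    rw [dyadic_t_succ, heven, dyadic_t_succ, pow_succ]; field_simp; ring
  calc (dyadic hab (n + 1)).sum Φ
    _ = ∑ i ∈ Finset.range (2 * 2 ^ n),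
        Φ ((dyadic hab (n + 1)).t i) ((dyadic hab (n + 1)).t (i + 1)) := by
      rw [← pow_succ']; rfl
    _ = _ := by
      rw [sum_range_two_mul]
      refine Finset.sum_congr rfl fun i _ => ?_
      rw [show 2 * i + 1 + 1 = 2 * (i + 1) by ring, heven, heven, hodd]

end RPartition

/-- The two-parameter function `Φ` takes values in `B_θ` on the simplex over `[a, b]`. -/
def GermMem (𝓑 : BanachScale) (θ : ℝ) (Φ : ℝ → ℝ → 𝓑.E) (a b : ℝ) : Prop :=
  ∀ u v, a ≤ u → u < v → v ≤ b → 𝓑.Mem θ (Φ u v)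

/-- The sums of `Φ` over partitions of `[a, b]` converge to `I` in `B_θ` as the mesh tends to
zero. Both `IsRiemannIntegral` and `IsRoughConvolution` are, definitionally, of this form. -/
def IsPartitionLimit (𝓑 : BanachScale) (θ : ℝ) (Φ : ℝ → ℝ → 𝓑.E) (a b : ℝ) (I : 𝓑.E) : Prop :=
  𝓑.Mem θ I ∧ ∀ ε > (0 : ℝ), ∃ δ > (0 : ℝ), ∀ π : RPartition a b, π.mesh < δ →
    𝓑.N θ (π.sum Φ - I) ≤ ε

section

open BanachScale RPartition Filter Topology

variable {𝓑 : BanachScale} {θ a b c : ℝ} {Φ Ψ : ℝ → ℝ → 𝓑.E}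

theorem GermMem.coe_sum_lift (h : GermMem 𝓑 θ Φ a b) (π : RPartition a b) :
    ((π.sum fun u v => 𝓑.lift θ (Φ u v) : 𝓑.space θ) : 𝓑.E) = π.sum Φ :=
  (π.map_sum (𝓑.space θ).subtype _).trans <|
    π.sum_congr fun u v hu huv hv => coe_lift (h u v hu huv hv)

theorem GermMem.mem_sum (h : GermMem 𝓑 θ Φ a b) (π : RPartition a b) : 𝓑.Mem θ (π.sum Φ) :=
  h.coe_sum_lift π ▸ Subtype.prop _

theorem GermMem.N_sum_le_sub (h : GermMem 𝓑 θ Φ a b) {ψ : ℝ → ℝ}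
    (hψ : ∀ u v, a ≤ u → u < v → v ≤ b → 𝓑.N θ (Φ u v) ≤ ψ u - ψ v) (π : RPartition a b) :
    𝓑.N θ (π.sum Φ) ≤ ψ a - ψ b := by
  rw [← h.coe_sum_lift π]
  exact π.norm_sum_le_sub fun u v hu huv hv _ =>
    (norm_lift (h u v hu huv hv)).trans_le (hψ u v hu huv hv)

theorem IsPartitionLimit.tendstoIn {I : 𝓑.E} (h : IsPartitionLimit 𝓑 θ Φ a b I)
    (hΦ : GermMem 𝓑 θ Φ a b) {π : ℕ → RPartition a b}
    (hπ : Tendsto (fun n => (π n).mesh) atTop (𝓝 0)) :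
    TendstoIn 𝓑 θ (fun n => (π n).sum Φ) I where
  mem_seq n := hΦ.mem_sum (π n)
  mem_lim := h.1
  tendsto_N := tendsto_N_sub_of_forall_lt fun ε hε => by
    obtain ⟨δ, hδ, hlim⟩ := h.2 (ε / 2) (half_pos hε)
    obtain ⟨M, hM⟩ := eventually_atTop.1 (hπ.eventually (gt_mem_nhds hδ))
    exact ⟨M, fun n hn => (hlim (π n) (hM n hn)).trans_lt (half_lt_self hε)⟩

/-- Compare the sums of `Ψ` over partitions of `[a, c]` that contain `b`. -/
theorem IsPartitionLimit.tendstoIn_dyadic_of_map {I J : 𝓑.E} {A : 𝓑.E →ₗ[ℝ] 𝓑.E} {C : ℝ}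
    (hA : ∀ x, 𝓑.Mem θ x → 𝓑.Mem θ (A x) ∧ 𝓑.N θ (A x) ≤ C * 𝓑.N θ x) (hab : a < b)
    (hbc : b < c) (hΦlim : IsPartitionLimit 𝓑 θ Φ a b I) (hΨlim : IsPartitionLimit 𝓑 θ Ψ a c J)
    (hΦ : GermMem 𝓑 θ Φ a b) (hΨ : GermMem 𝓑 θ Ψ a c)
    (hmap : ∀ u v, a ≤ u → u < v → v ≤ b → Ψ u v = A (Φ u v)) :
    TendstoIn 𝓑 θ (fun n => (dyadic hbc n).sum Ψ) (J - A I) := by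
  have hmesh : Tendsto (fun n => ((dyadic hab n).append (dyadic hbc n)).mesh) atTop (𝓝 0) :=
    squeeze_zero (fun n => mesh_nonneg _) (fun n => mesh_append_le _ _)
      (by simpa using (tendsto_mesh_dyadic hab).max (tendsto_mesh_dyadic hbc))
  have hleft (n : ℕ) : A ((dyadic hab n).sum Φ) = (dyadic hab n).sum Ψ :=
    ((dyadic hab n).map_sum A Φ).trans ((dyadic hab n).sum_congr hmap).symm
  simpa only [hleft, sum_append, add_sub_cancel_left] using
    (hΨlim.tendstoIn hΨ hmesh).sub ((hΦlim.tendstoIn hΦ (tendsto_mesh_dyadic hab)).map hA)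

end

theorem sub_mul_rpow_sub_one_le {a b κ : ℝ} (ha : 0 < a) (hb : 0 ≤ b) (hκ : 0 < κ)
    (hκ1 : κ ≤ 1) : (a - b) * a ^ (κ - 1) ≤ κ⁻¹ * a ^ κ - κ⁻¹ * b ^ κ := by
  have hbern : (b / a) ^ κ ≤ 1 + κ * (b / a - 1) := by
    simpa using rpow_one_add_le_one_add_mul_self (s := b / a - 1)
      (by linarith [div_nonneg hb ha.le]) hκ.le hκ1
  rw [Real.div_rpow hb ha.le, div_le_iff₀ (Real.rpow_pos_of_pos ha κ)] at hbern
  rw [Real.rpow_sub_one ha.ne', ← mul_sub, inv_mul_eq_div, le_div_iff₀ hκ]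
  calc (a - b) * (a ^ κ / a) * κ
    _ = a ^ κ - (1 + κ * (b / a - 1)) * a ^ κ := by field_simp; ring
    _ ≤ a ^ κ - b ^ κ := by linarith

theorem rpow_mul_rpow_neg_le_telescope {u v t h ζ β κ : ℝ} (huv : u < v) (hvt : v ≤ t)
    (hvh : v - u ≤ h) (hκ : 0 < κ) (hκ1 : κ ≤ 1) (hβκ : 1 ≤ β + κ) (hκζ : β + κ ≤ ζ) :
    (v - u) ^ ζ * (t - u) ^ (-β)
      ≤ h ^ (ζ - β - κ) * (κ⁻¹ * (t - u) ^ κ - κ⁻¹ * (t - v) ^ κ) := by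
  have hvu : 0 < v - u := sub_pos.2 huv
  have htu : 0 < t - u := by linarith
  have hh : 0 ≤ h := hvu.le.trans hvh
  calc (v - u) ^ ζ * (t - u) ^ (-β)
    _ = (v - u) ^ (ζ - β - κ)
        * ((v - u) * ((v - u) ^ (β + κ - 1) * (t - u) ^ (-(β + κ - 1))) * (t - u) ^ (κ - 1)) := by
      rw [show ζ = ζ - β - κ + (1 + (β + κ - 1)) by ring, Real.rpow_add hvu,
        Real.rpow_one_add' hvu.le (by linarith),
        show -β = -(β + κ - 1) + (κ - 1) by ring, Real.rpow_add htu]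
      ring_nf
    _ ≤ h ^ (ζ - β - κ) * ((v - u) * 1 * (t - u) ^ (κ - 1)) := by
      gcongr
      · linarith
      · rw [Real.rpow_neg htu.le, ← div_eq_mul_inv, div_le_one (by positivity)]
        exact Real.rpow_le_rpow hvu.le (by linarith) (by linarith)
    _ ≤ h ^ (ζ - β - κ) * (κ⁻¹ * (t - u) ^ κ - κ⁻¹ * (t - v) ^ κ) := by
      have := sub_mul_rpow_sub_one_le htu (sub_nonneg.2 hvt) hκ hκ1
      gcongr
      linarith

theorem exists_sewing_exponent {ζ β : ℝ} (hζ : 1 < ζ) (hβ : β < ζ) (hβ0 : 0 ≤ β) :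
    ∃ κ, 0 < κ ∧ κ ≤ 1 ∧ 1 ≤ β + κ ∧ β + κ < ζ := by
  rcases lt_or_ge β 1 with h | h
  · exact ⟨1 - β, by linarith, by linarith, by linarith, by linarith⟩
  · refine ⟨min 1 ((ζ - β) / 2), lt_min one_pos (by linarith), min_le_left _ _, ?_, ?_⟩
    · linarith [le_min zero_le_one (show 0 ≤ (ζ - β) / 2 by linarith)]
    · linarith [min_le_right 1 ((ζ - β) / 2)]

section

open RPartition Filter Topology

variable {V : Type*} [NormedAddCommGroup V] {ζ β κ s t A : ℝ}

theorem RPartition.norm_sum_le_of_norm_le_rpow_mul_rpow_neg {Φ : ℝ → ℝ → V} (hA : 0 ≤ A)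
    (hκ : 0 < κ) (hκ1 : κ ≤ 1) (hβκ : 1 ≤ β + κ) (hκζ : β + κ ≤ ζ)
    (hΦ : ∀ u v, s ≤ u → u < v → v ≤ t → ‖Φ u v‖ ≤ A * ((v - u) ^ ζ * (t - u) ^ (-β)))
    (π : RPartition s t) :
    ‖π.sum Φ‖ ≤ A * (κ⁻¹ * π.mesh ^ (ζ - β - κ) * (t - s) ^ κ) := by
  have := π.norm_sum_le_sub (Φ := Φ)
    (ψ := fun u => A * (π.mesh ^ (ζ - β - κ) * (κ⁻¹ * (t - u) ^ κ))) fun u v hu huv hv hmesh => by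
      rw [← mul_sub, ← mul_sub]
      exact (hΦ u v hu huv hv).trans (mul_le_mul_of_nonneg_left
        (rpow_mul_rpow_neg_le_telescope huv hv hmesh hκ hκ1 hβκ hκζ) hA)
  refine this.trans_eq ?_
  rw [sub_self, Real.zero_rpow hκ.ne']
  ring

theorem norm_sum_dyadic_succ_sub_le {Ξ : ℝ → ℝ → V} (hst : s < t) (hA : 0 ≤ A) (hβ : 0 ≤ β)
    (hκ : 0 < κ) (hκ1 : κ ≤ 1) (hβκ : 1 ≤ β + κ) (hκζ : β + κ ≤ ζ)
    (hΞ : ∀ u m v, s ≤ u → u < m → m < v → v ≤ t →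
      ‖Ξ u v - Ξ u m - Ξ m v‖ ≤ A * ((v - u) ^ ζ * (t - m) ^ (-β))) (n : ℕ) :
    ‖(dyadic hst (n + 1)).sum Ξ - (dyadic hst n).sum Ξ‖
      ≤ 2 ^ β * κ⁻¹ * A * (t - s) ^ (ζ - β) * (2 ^ (-(ζ - β - κ))) ^ n := by
  have hmid (u v : ℝ) (hu : s ≤ u) (huv : u < v) (hv : v ≤ t) :
      ‖Ξ u v - (Ξ u ((u + v) / 2) + Ξ ((u + v) / 2) v)‖
        ≤ 2 ^ β * A * ((v - u) ^ ζ * (t - u) ^ (-β)) := by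
    have hweight : (t - (u + v) / 2) ^ (-β) ≤ 2 ^ β * (t - u) ^ (-β) := by
      calc (t - (u + v) / 2) ^ (-β)
        _ ≤ ((t - u) / 2) ^ (-β) :=
          Real.rpow_le_rpow_of_nonpos (by linarith) (by linarith) (by linarith)
        _ = 2 ^ β * (t - u) ^ (-β) := by
          rw [Real.div_rpow (by linarith) zero_le_two, Real.rpow_neg zero_le_two, div_inv_eq_mul,
            mul_comm]
    rw [← sub_sub]
    calc _ ≤ A * ((v - u) ^ ζ * (t - (u + v) / 2) ^ (-β)) :=
          hΞ u _ v hu (by linarith) (by linarith) hv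
      _ ≤ A * ((v - u) ^ ζ * (2 ^ β * (t - u) ^ (-β))) := by gcongr
      _ = 2 ^ β * A * ((v - u) ^ ζ * (t - u) ^ (-β)) := by ring
  rw [sum_dyadic_succ, norm_sub_rev, ← sum_sub]
  refine ((dyadic hst n).norm_sum_le_of_norm_le_rpow_mul_rpow_neg (by positivity) hκ hκ1 hβκ
    hκζ hmid).trans ?_
  have hts : 0 < t - s := sub_pos.2 hst
  have hexp : ((t - s) / 2 ^ n) ^ (ζ - β - κ) * (t - s) ^ κ
      = (t - s) ^ (ζ - β) * ((2 : ℝ) ^ (-(ζ - β - κ))) ^ n := by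
    rw [Real.div_rpow hts.le (by positivity), Real.rpow_neg zero_le_two, inv_pow, Real.rpow_pow_comm
      zero_le_two, div_eq_mul_inv, mul_right_comm, ← Real.rpow_add hts, sub_add_cancel]
  calc 2 ^ β * A * (κ⁻¹ * (dyadic hst n).mesh ^ (ζ - β - κ) * (t - s) ^ κ)
    _ ≤ 2 ^ β * A * (κ⁻¹ * ((t - s) / 2 ^ n) ^ (ζ - β - κ) * (t - s) ^ κ) := by
      have := mesh_nonneg (dyadic hst n)
      have := mesh_dyadic_le hst n
      gcongr
      linarith
    _ = _ := by rw [mul_assoc κ⁻¹, hexp]; ring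

/-- **Sewing lemma** with a singular weight at the right end point. -/
theorem exists_tendsto_sum_dyadic_of_norm_defect_le [CompleteSpace V] (hζ : 1 < ζ) (hβ : 0 ≤ β)
    (hβζ : β < ζ) :
    ∃ C > 0, ∀ (Ξ : ℝ → ℝ → V) (s t A : ℝ) (hst : s < t), 0 ≤ A →
      (∀ u m v, s ≤ u → u < m → m < v → v ≤ t →
        ‖Ξ u v - Ξ u m - Ξ m v‖ ≤ A * ((v - u) ^ ζ * (t - m) ^ (-β))) →
      ∃ W, Tendsto (fun n => (dyadic hst n).sum Ξ) atTop (𝓝 W) ∧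
        ‖W - Ξ s t‖ ≤ C * A * (t - s) ^ (ζ - β) := by
  obtain ⟨κ, hκ, hκ1, hβκ, hκζ⟩ := exists_sewing_exponent hζ hβζ hβ
  have hq : (2 : ℝ) ^ (-(ζ - β - κ)) < 1 :=
    Real.rpow_lt_one_of_one_lt_of_neg one_lt_two (by linarith)
  refine ⟨2 ^ β * κ⁻¹ / (1 - 2 ^ (-(ζ - β - κ))), div_pos (by positivity) (sub_pos.2 hq),
    fun Ξ s t A hst hA hΞ => ?_⟩
  have hstep (n : ℕ) : dist ((dyadic hst n).sum Ξ) ((dyadic hst (n + 1)).sum Ξ)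
      ≤ 2 ^ β * κ⁻¹ * A * (t - s) ^ (ζ - β) * (2 ^ (-(ζ - β - κ))) ^ n := by
    rw [dist_eq_norm']
    exact norm_sum_dyadic_succ_sub_le hst hA hβ hκ hκ1 hβκ hκζ.le hΞ n
  obtain ⟨W, hW⟩ := cauchySeq_tendsto_of_complete (cauchySeq_of_le_geometric _ _ hq hstep)
  refine ⟨W, hW, ?_⟩
  have := dist_le_of_le_geometric_of_tendsto₀ _ _ hq hstep hW
  rw [sum_dyadic_zero, dist_eq_norm'] at this
  exact this.trans_eq (by ring)

theorem BanachScale.exists_tendstoIn_sum_dyadic_of_N_defect_le (𝓑 : BanachScale) (θ : ℝ)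
    (hζ : 1 < ζ) (hβ : 0 ≤ β) (hβζ : β < ζ) :
    ∃ C > 0, ∀ (Ξ : ℝ → ℝ → 𝓑.E) (s t A : ℝ) (hst : s < t), 0 ≤ A → GermMem 𝓑 θ Ξ s t →
      (∀ u m v, s ≤ u → u < m → m < v → v ≤ t →
        𝓑.N θ (Ξ u v - Ξ u m - Ξ m v) ≤ A * ((v - u) ^ ζ * (t - m) ^ (-β))) →
      ∃ W, TendstoIn 𝓑 θ (fun n => (dyadic hst n).sum Ξ) W ∧
        𝓑.N θ (W - Ξ s t) ≤ C * A * (t - s) ^ (ζ - β) := by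
  obtain ⟨C, hC, h⟩ :=
    exists_tendsto_sum_dyadic_of_norm_defect_le (V := 𝓑.space θ) hζ hβ hβζ
  refine ⟨C, hC, fun Ξ s t A hst hA hmem hΞ => ?_⟩
  obtain ⟨W, hW, hbound⟩ := h (fun u v => 𝓑.lift θ (Ξ u v)) s t A hst hA
    fun u m v hu hum hmv hv => by
      have hcoe : ((𝓑.lift θ (Ξ u v) - 𝓑.lift θ (Ξ u m) - 𝓑.lift θ (Ξ m v) : 𝓑.space θ) : 𝓑.E)
          = Ξ u v - Ξ u m - Ξ m v := by
        rw [Submodule.coe_sub, Submodule.coe_sub, coe_lift (hmem u v hu (hum.trans hmv) hv),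
          coe_lift (hmem u m hu hum (by linarith)), coe_lift (hmem m v (by linarith) hmv hv)]
      exact (congrArg (𝓑.N θ) hcoe).trans_le (hΞ u m v hu hum hmv hv)
  refine ⟨W, ?_, ?_⟩
  · simpa only [hmem.coe_sum_lift] using TendstoIn.of_tendsto_space hW
  · have hst' := hmem s t le_rfl hst le_rfl
    rw [← coe_lift hst']
    exact hbound

end

namespace ScaleSemigroup

variable {𝓑 : BanachScale} {a b Tm t : ℝ} {x : 𝓑.E}

theorem exists_N_le_mul (Sg : ScaleSemigroup 𝓑) (a : ℝ) (hTm : 0 < Tm) :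
    ∃ C > 0, ∀ t, 0 ≤ t → t ≤ Tm → ∀ x, 𝓑.Mem a x →
      𝓑.Mem a (Sg.S t x) ∧ 𝓑.N a (Sg.S t x) ≤ C * 𝓑.N a x :=
  let ⟨C, hC, h⟩ := Sg.S_bounded a Tm hTm
  ⟨C, hC, fun t ht htT x hx => ⟨Sg.S_mem t a x ht hx, h t x ht htT hx⟩⟩

theorem exists_N_sub_self_le (Sg : ScaleSemigroup 𝓑) (hab : a ≤ b) (hba : b ≤ a + 1)
    (hTm : 0 < Tm) :
    ∃ C > 0, ∀ t x, 0 < t → t ≤ Tm → 𝓑.Mem b x →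
      𝓑.N a (Sg.S t x - x) ≤ C * t ^ (b - a) * 𝓑.N b x := by
  simpa using Sg.S_holdId a (b - a) Tm (sub_nonneg.2 hab) (by linarith) hTm

/-- Two half steps extend the smoothing bound from a gain of one to a gain of two derivatives. -/
theorem exists_N_le_rpow_mul (Sg : ScaleSemigroup 𝓑) (hab : a ≤ b) (hba : b ≤ a + 2)
    (hTm : 0 < Tm) :
    ∃ C > 0, ∀ t x, 0 < t → t ≤ Tm → 𝓑.Mem a x →
      𝓑.Mem b (Sg.S t x) ∧ 𝓑.N b (Sg.S t x) ≤ C * t ^ (-(b - a)) * 𝓑.N a x := by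
  set η := (b - a) / 2 with hη
  obtain ⟨C₁, hC₁, h₁⟩ := Sg.S_smoothing a η Tm (by linarith) (by linarith) hTm
  obtain ⟨C₂, hC₂, h₂⟩ := Sg.S_smoothing (a + η) η Tm (by linarith) (by linarith) hTm
  rw [show a + η + η = b by rw [hη]; ring] at h₂
  refine ⟨C₂ * C₁ * 2 ^ (b - a), by positivity, fun t x ht htT hx => ?_⟩
  obtain ⟨hmem₁, hN₁⟩ := h₁ (t / 2) x (by linarith) (by linarith) hx
  obtain ⟨hmem₂, hN₂⟩ := h₂ (t / 2) _ (by linarith) (by linarith) hmem₁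
  rw [← Sg.S_comp _ _ (by linarith) (by linarith), add_halves] at hmem₂ hN₂
  refine ⟨hmem₂, ?_⟩
  have hpow : (t / 2) ^ (-η) * (t / 2) ^ (-η) = 2 ^ (b - a) * t ^ (-(b - a)) := by
    rw [← Real.rpow_add (by linarith), show -η + -η = -(b - a) by rw [hη]; ring,
      Real.div_rpow ht.le zero_le_two, Real.rpow_neg zero_le_two, div_inv_eq_mul, mul_comm]
  calc 𝓑.N b (Sg.S t x)
    _ ≤ C₂ * (t / 2) ^ (-η) * (C₁ * (t / 2) ^ (-η) * 𝓑.N a x) := by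
      refine hN₂.trans ?_
      gcongr
    _ = C₂ * C₁ * ((t / 2) ^ (-η) * (t / 2) ^ (-η)) * 𝓑.N a x := by ring
    _ = C₂ * C₁ * 2 ^ (b - a) * t ^ (-(b - a)) * 𝓑.N a x := by rw [hpow]; ring

theorem mem_of_pos (Sg : ScaleSemigroup 𝓑) (hba : b ≤ a + 2) (ht : 0 < t) (hx : 𝓑.Mem a x) :
    𝓑.Mem b (Sg.S t x) := by
  obtain ⟨_, _, h⟩ := Sg.exists_N_le_rpow_mul (le_max_left a b) (max_le (by linarith) hba) ht
  exact 𝓑.mem_mono (le_max_right a b) _ (h t x ht le_rfl hx).1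

theorem S_sub_apply (Sg : ScaleSemigroup 𝓑) {u m t : ℝ} (hum : u ≤ m) (hmt : m ≤ t) (x : 𝓑.E) :
    Sg.S (t - u) x = Sg.S (t - m) (Sg.S (m - u) x) := by
  rw [← Sg.S_comp _ _ (sub_nonneg.2 hmt) (sub_nonneg.2 hum), sub_add_sub_cancel]

end ScaleSemigroup

theorem RoughPath.exists_bound {α T : ℝ} (RP : RoughPath α T) :
    ∃ c > 0, ∀ s t, 0 ≤ s → s ≤ t → t ≤ T →
      |RP.X t - RP.X s| ≤ c * (t - s) ^ α ∧ |RP.X2 s t| ≤ c * (t - s) ^ (2 * α) := by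
  obtain ⟨c₁, h₁⟩ := RP.holderX
  obtain ⟨c₂, h₂⟩ := RP.holderX2
  refine ⟨max (max c₁ c₂) 1, lt_max_of_lt_right one_pos, fun s t hs hst ht => ?_⟩
  have hpow (p : ℝ) : 0 ≤ (t - s) ^ p := Real.rpow_nonneg (sub_nonneg.2 hst) p
  exact ⟨(h₁ s t hs hst ht).trans (mul_le_mul_of_nonneg_right (by simp) (hpow _)),
    (h₂ s t hs hst ht).trans (mul_le_mul_of_nonneg_right (by simp) (hpow _))⟩

theorem rpow_natCast_mul_le_rpow_pow {x y α : ℝ} (n : ℕ) (hx : 0 ≤ x) (hxy : x ≤ y)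
    (hα : 0 ≤ α) : x ^ (n * α) ≤ (y ^ α) ^ n := by
  rw [mul_comm, Real.rpow_mul_natCast hx]
  exact pow_le_pow_left₀ (Real.rpow_nonneg hx α) (Real.rpow_le_rpow hx hxy hα) n

theorem RoughPath.exists_bound_of_le_of_le {α T : ℝ} (RP : RoughPath α T) (hα : 0 ≤ α) :
    ∃ c > 0, ∀ u m v, 0 ≤ u → u ≤ m → m ≤ v → v ≤ T →
      |RP.X v - RP.X m| ≤ c * (v - u) ^ α ∧
        |RP.X2 u v - RP.X2 u m| ≤ 2 * c * ((v - u) ^ α) ^ 2 ∧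
        |RP.X2 m v| ≤ c * ((v - u) ^ α) ^ 2 := by
  obtain ⟨c, hc, hX⟩ := RP.exists_bound
  refine ⟨c, hc, fun u m v hu hum hmv hv => ?_⟩
  have hX2 (r s : ℝ) (hr : u ≤ r) (hrs : r ≤ s) (hs : s ≤ v) :
      |RP.X2 r s| ≤ c * ((v - u) ^ α) ^ 2 := by
    refine (hX r s (hu.trans hr) hrs (hs.trans hv)).2.trans ?_
    exact mul_le_mul_of_nonneg_left
      (rpow_natCast_mul_le_rpow_pow 2 (sub_nonneg.2 hrs) (by linarith) hα) hc.le
  refine ⟨(hX m v (hu.trans hum) hmv hv).1.trans ?_, ?_, hX2 m v hum hmv le_rfl⟩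
  · have : 0 ≤ v - m := sub_nonneg.2 hmv
    gcongr
  · linarith [abs_sub (RP.X2 u v) (RP.X2 u m), hX2 u v le_rfl (hum.trans hmv) le_rfl,
      hX2 u m le_rfl hum hmv]

/-- The summand `(v - u) S(t - u) f_u` of the Riemann sums for `∫ S(t - r) f_r dr`. -/
def driftGerm {𝓑 : BanachScale} (Sg : ScaleSemigroup 𝓑) (f : ℝ → 𝓑.E) (t u v : ℝ) : 𝓑.E :=
  (v - u) • Sg.S (t - u) (f u)

/-- The summand `S(t - u) [g_u X_{u,v} + g'_u X⁽²⁾_{u,v}]` of the compensated Riemann sums for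
`∫ S(t - r) g_r d𝐗_r`. -/
def roughGerm {𝓑 : BanachScale} (Sg : ScaleSemigroup 𝓑) (X : ℝ → ℝ) (X2 : ℝ → ℝ → ℝ)
    (g g' : ℝ → 𝓑.E) (t u v : ℝ) : 𝓑.E :=
  Sg.S (t - u) ((X v - X u) • g u + X2 u v • g' u)

/-- The element `w` for which `S(t - m) w` is the defect of additivity of `roughGerm` at
`u ≤ m ≤ v`. -/
def roughDefect {𝓑 : BanachScale} (Sg : ScaleSemigroup 𝓑) (X : ℝ → ℝ) (X2 : ℝ → ℝ → ℝ)
    (g g' : ℝ → 𝓑.E) (u m v : ℝ) : 𝓑.E :=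
  (X v - X m) • (Sg.S (m - u) (g u) - g u) + (X2 u v - X2 u m) • (Sg.S (m - u) (g' u) - g' u)
    - ((X v - X m) • gubRemainder 𝓑 X g g' u m + X2 m v • (g' m - g' u))

/-- `(g, g')` is controlled by `X` on `[0, T]` relative to the scale shifted to `B_κ`, with `K`
bounding the norms of `g` and `g'`, the remainder and the increments of `g'`. -/
structure ControlledBound (𝓑 : BanachScale) (α κ T : ℝ) (X : ℝ → ℝ) (g g' : ℝ → 𝓑.E) (K : ℝ) :
    Prop where
  mem : ∀ t, 0 ≤ t → t ≤ T → 𝓑.Mem κ (g t)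
  mem_deriv : ∀ t, 0 ≤ t → t ≤ T → 𝓑.Mem (κ - α) (g' t)
  bound : ∀ t, 0 ≤ t → t ≤ T → 𝓑.N κ (g t) ≤ K
  bound_deriv : ∀ t, 0 ≤ t → t ≤ T → 𝓑.N (κ - α) (g' t) ≤ K
  bound_remainder : ∀ s t, 0 ≤ s → s < t → t ≤ T →
    𝓑.N (κ - 2 * α) (gubRemainder 𝓑 X g g' s t) ≤ K * (t - s) ^ (2 * α)
  bound_increment_deriv : ∀ s t, 0 ≤ s → s < t → t ≤ T →
    𝓑.N (κ - 2 * α) (g' t - g' s) ≤ K * (t - s) ^ α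

section

open BanachScale RPartition

variable {𝓑 : BanachScale} {α κ a b T Tm K s t u m v : ℝ} {Sg : ScaleSemigroup 𝓑}
  {X : ℝ → ℝ} {X2 : ℝ → ℝ → ℝ} {f g g' : ℝ → 𝓑.E}

theorem germMem_driftGerm (hba : b ≤ a + 2) (hf : ∀ u, s ≤ u → u < t → 𝓑.Mem a (f u)) :
    GermMem 𝓑 b (driftGerm Sg f t) s t :=
  fun u v hu huv hv => 𝓑.mem_smul _ _ _ <|
    Sg.mem_of_pos hba (by linarith) (hf u hu (huv.trans_le hv))

theorem exists_N_sum_driftGerm_le (Sg : ScaleSemigroup 𝓑) (hab : a ≤ b) (hba : b < a + 1)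
    (hTm : 0 < Tm) :
    ∃ C > 0, ∀ (f : ℝ → 𝓑.E) (s t M : ℝ), s < t → t - s ≤ Tm →
      (∀ u, s ≤ u → u < t → 𝓑.Mem a (f u)) → (∀ u, s ≤ u → u < t → 𝓑.N a (f u) ≤ M) →
      ∀ π : RPartition s t,
        𝓑.N b (π.sum (driftGerm Sg f t)) ≤ C * M * (t - s) ^ (1 - (b - a)) := by
  obtain ⟨C, hC, hS⟩ := Sg.exists_N_le_rpow_mul hab (by linarith) hTm
  set κ := 1 - (b - a) with hκ
  have hκ0 : 0 < κ := by linarith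
  refine ⟨C * κ⁻¹, by positivity, fun f s t M hst htm hf hfM π => ?_⟩
  have hM : 0 ≤ M := (𝓑.N_nonneg _ _).trans (hfM s le_rfl hst)
  have := (germMem_driftGerm (Sg := Sg) (b := b) (by linarith) hf).N_sum_le_sub
    (ψ := fun u => C * M * (κ⁻¹ * (t - u) ^ κ)) (fun u v hu huv hv => ?_) π
  · refine this.trans_eq ?_
    rw [sub_self, Real.zero_rpow hκ0.ne']
    ring
  · have htu : 0 < t - u := by linarith
    have hvu : 0 < v - u := sub_pos.2 huv
    calc 𝓑.N b (driftGerm Sg f t u v)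
      _ = (v - u) * 𝓑.N b (Sg.S (t - u) (f u)) := by
        rw [driftGerm, 𝓑.N_smul, abs_of_pos hvu]
      _ ≤ (v - u) * (C * (t - u) ^ (-(b - a)) * M) := by
        gcongr
        refine (hS (t - u) (f u) htu (by linarith) (hf u hu (by linarith))).2.trans ?_
        have := hfM u hu (by linarith)
        gcongr
      _ = C * M * ((t - u - (t - v)) * (t - u) ^ (κ - 1)) := by
        rw [hκ]; ring_nf
      _ ≤ C * M * (κ⁻¹ * (t - u) ^ κ - κ⁻¹ * (t - v) ^ κ) := by
        have := sub_mul_rpow_sub_one_le htu (sub_nonneg.2 hv) hκ0 (by linarith)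
        gcongr
      _ = _ := mul_sub _ _ _

theorem RoughPath.roughGerm_defect_eq (RP : RoughPath α Tm) (Sg : ScaleSemigroup 𝓑)
    (g g' : ℝ → 𝓑.E) (hu : 0 ≤ u) (hum : u ≤ m) (hmv : m ≤ v) (hv : v ≤ Tm) (hmt : m ≤ t) :
    roughGerm Sg RP.X RP.X2 g g' t u v - roughGerm Sg RP.X RP.X2 g g' t u m
        - roughGerm Sg RP.X RP.X2 g g' t m v
      = Sg.S (t - m) (roughDefect Sg RP.X RP.X2 g g' u m v) := by
  have hchen : RP.X2 u v = RP.X2 u m + RP.X2 m v + (RP.X m - RP.X u) * (RP.X v - RP.X m) := by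
    linarith [RP.chen u m v hu hum hmv hv]
  rw [roughGerm, roughGerm, roughGerm, Sg.S_sub_apply hum hmt, Sg.S_sub_apply hum hmt, ← map_sub,
    ← map_sub, roughDefect, gubRemainder, hchen]
  congr 1
  simp only [map_add, map_smul]
  module

namespace ControlledBound

theorem nonneg (h : ControlledBound 𝓑 α κ T X g g' K) (hT : 0 ≤ T) : 0 ≤ K :=
  (𝓑.N_nonneg _ _).trans (h.bound 0 le_rfl hT)

theorem germMem_roughGerm (h : ControlledBound 𝓑 α κ T X g g' K) (hα : 0 ≤ α)
    (hb : b ≤ κ - α + 2) (hs : 0 ≤ s) (ht : t ≤ T) :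
    GermMem 𝓑 b (roughGerm Sg X X2 g g' t) s t := fun u v hu huv hv =>
  have hgu := 𝓑.mem_mono (sub_le_self κ hα) _ (h.mem u (by linarith) (by linarith))
  Sg.mem_of_pos hb (by linarith) <| 𝓑.mem_add _ _ _ (𝓑.mem_smul _ _ _ hgu) <|
    𝓑.mem_smul _ _ _ (h.mem_deriv u (by linarith) (by linarith))

theorem mem_gubRemainder (h : ControlledBound 𝓑 α κ T X g g' K) (hα : 0 ≤ α) (hs : 0 ≤ s)
    (hst : s ≤ t) (ht : t ≤ T) : 𝓑.Mem (κ - α) (gubRemainder 𝓑 X g g' s t) :=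
  have hmem (r : ℝ) (hr : 0 ≤ r) (hrT : r ≤ T) := 𝓑.mem_mono (sub_le_self κ hα) _ (h.mem r hr hrT)
  mem_sub (mem_sub (hmem t (hs.trans hst) ht) (hmem s hs (hst.trans ht)))
    (𝓑.mem_smul _ _ _ (h.mem_deriv s hs (hst.trans ht)))

theorem mem_roughDefect_and_N_le (h : ControlledBound 𝓑 α κ T X g g' K) (hα : 0 ≤ α)
    (hu : 0 ≤ u) (hum : u ≤ m) (hm : m ≤ T) :
    𝓑.Mem (κ - 2 * α) (roughDefect Sg X X2 g g' u m v) ∧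
      𝓑.N (κ - 2 * α) (roughDefect Sg X X2 g g' u m v)
        ≤ |X v - X m| * 𝓑.N (κ - 2 * α) (Sg.S (m - u) (g u) - g u)
          + |X2 u v - X2 u m| * 𝓑.N (κ - 2 * α) (Sg.S (m - u) (g' u) - g' u)
          + (|X v - X m| * 𝓑.N (κ - 2 * α) (gubRemainder 𝓑 X g g' u m)
            + |X2 m v| * 𝓑.N (κ - 2 * α) (g' m - g' u)) := by
  have hmono {r : ℝ} {x : 𝓑.E} (hr : κ - 2 * α ≤ r) (hx : 𝓑.Mem r x) := 𝓑.mem_mono hr x hx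
  have hg := hmono (by linarith) (h.mem u hu (hum.trans hm))
  have hg' (r : ℝ) (hr : 0 ≤ r) (hrT : r ≤ T) := hmono (by linarith) (h.mem_deriv r hr hrT)
  have hsub {x : 𝓑.E} (hx : 𝓑.Mem (κ - 2 * α) x) :=
    mem_sub (Sg.S_mem (m - u) _ _ (sub_nonneg.2 hum) hx) hx
  have hR := hmono (by linarith) (h.mem_gubRemainder hα hu hum hm)
  have hSg' := hsub (hg' u hu (hum.trans hm))
  have hQ := mem_sub (hg' m (hu.trans hum) hm) (hg' u hu (hum.trans hm))
  have hadd {p q : ℝ} {x z : 𝓑.E} (hx : 𝓑.Mem (κ - 2 * α) x) (hz : 𝓑.Mem (κ - 2 * α) z) :=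
    𝓑.mem_add _ _ _ (𝓑.mem_smul _ p _ hx) (𝓑.mem_smul _ q _ hz)
  exact ⟨mem_sub (hadd (hsub hg) hSg') (hadd hR hQ),
    (N_sub_le (hadd (hsub hg) hSg') (hadd hR hQ)).trans <|
      add_le_add (N_smul_add_smul_le (hsub hg) hSg' _ _) (N_smul_add_smul_le hR hQ _ _)⟩

theorem exists_N_roughDefect_le (RP : RoughPath α Tm) (Sg : ScaleSemigroup 𝓑) (κ : ℝ)
    (hα : 0 ≤ α) (hα2 : α ≤ 1 / 2) (hTm : 0 < Tm) :
    ∃ C > 0, ∀ (T K : ℝ) (g g' : ℝ → 𝓑.E), T ≤ Tm → ControlledBound 𝓑 α κ T RP.X g g' K →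
      ∀ u m v, 0 ≤ u → u < m → m < v → v ≤ T →
        𝓑.N (κ - 2 * α) (roughDefect Sg RP.X RP.X2 g g' u m v) ≤ C * K * (v - u) ^ (3 * α) := by
  obtain ⟨c, hc, hX⟩ := RP.exists_bound_of_le_of_le hα
  obtain ⟨C₂, hC₂, hS₂⟩ := Sg.exists_N_sub_self_le (a := κ - 2 * α) (b := κ) (by linarith)
    (by linarith) hTm
  obtain ⟨C₁, hC₁, hS₁⟩ := Sg.exists_N_sub_self_le (a := κ - 2 * α) (b := κ - α) (by linarith)
    (by linarith) hTm
  rw [sub_sub_cancel] at hS₂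
  rw [show κ - α - (κ - 2 * α) = α by ring] at hS₁
  refine ⟨c * C₂ + 2 * c * C₁ + 2 * c, by positivity, fun T K g g' hT h u m v hu hum hmv hv => ?_⟩
  have hmT : m ≤ T := hmv.le.trans hv
  have huT : u ≤ T := hum.le.trans hmT
  have hmu : 0 < m - u := sub_pos.2 hum
  have hmuTm : m - u ≤ Tm := by linarith
  have hK := h.nonneg (hu.trans huT)
  obtain ⟨hXmv, hX2, hX2mv⟩ := hX u m v hu hum.le hmv.le (hv.trans hT)
  set d := (v - u) ^ α
  have hd₁ : (m - u) ^ α ≤ d := Real.rpow_le_rpow hmu.le (by linarith) hα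
  have hd₂ : (m - u) ^ (2 * α) ≤ d ^ 2 :=
    rpow_natCast_mul_le_rpow_pow 2 hmu.le (by linarith) hα
  have hd : 0 ≤ d := (Real.rpow_nonneg hmu.le α).trans hd₁
  have hSg : 𝓑.N (κ - 2 * α) (Sg.S (m - u) (g u) - g u) ≤ C₂ * d ^ 2 * K := by
    grw [hS₂ _ _ hmu hmuTm (h.mem u hu huT), h.bound u hu huT, hd₂]
  have hSg' : 𝓑.N (κ - 2 * α) (Sg.S (m - u) (g' u) - g' u) ≤ C₁ * d * K := by
    grw [hS₁ _ _ hmu hmuTm (h.mem_deriv u hu huT), h.bound_deriv u hu huT, hd₁]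
  have hR : 𝓑.N (κ - 2 * α) (gubRemainder 𝓑 RP.X g g' u m) ≤ K * d ^ 2 := by
    grw [h.bound_remainder u m hu hum hmT, hd₂]
  have hQ : 𝓑.N (κ - 2 * α) (g' m - g' u) ≤ K * d := by
    grw [h.bound_increment_deriv u m hu hum hmT, hd₁]
  have hN := 𝓑.N_nonneg (κ - 2 * α)
  calc _
    _ ≤ _ := (h.mem_roughDefect_and_N_le hα hu hum.le hmT).2
    _ ≤ c * d * (C₂ * d ^ 2 * K) + 2 * c * d ^ 2 * (C₁ * d * K)
          + (c * d * (K * d ^ 2) + c * d ^ 2 * (K * d)) := by gcongr <;> exact hN _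
    _ = (c * C₂ + 2 * c * C₁ + 2 * c) * K * d ^ 3 := by ring
    _ = _ := by
      rw [mul_comm 3 α, ← Real.rpow_natCast, ← Real.rpow_mul (by linarith)]
      norm_num

theorem exists_roughConvolution (RP : RoughPath α Tm) (Sg : ScaleSemigroup 𝓑) (hα : 1 / 3 < α)
    (hα2 : α ≤ 1 / 2) (hb : κ - 2 * α ≤ b) (hbκ : b < κ + α) (hTm : 0 < Tm) :
    ∃ C > 0, ∀ (T K : ℝ) (g g' : ℝ → 𝓑.E), T ≤ Tm → ControlledBound 𝓑 α κ T RP.X g g' K →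
      ∀ s t, 0 ≤ s → ∀ hst : s < t, t ≤ T → ∃ W,
        TendstoIn 𝓑 b (fun n => (dyadic hst n).sum (roughGerm Sg RP.X RP.X2 g g' t)) W ∧
          𝓑.N b (W - roughGerm Sg RP.X RP.X2 g g' t s t) ≤ C * K * (t - s) ^ (κ + α - b) := by
  obtain ⟨C₁, hC₁, hdefect⟩ := exists_N_roughDefect_le RP Sg κ (by linarith) hα2 hTm
  obtain ⟨C₂, hC₂, hS⟩ := Sg.exists_N_le_rpow_mul hb (by linarith) hTm
  obtain ⟨C₃, hC₃, hsew⟩ := exists_tendstoIn_sum_dyadic_of_N_defect_le 𝓑 b (ζ := 3 * α)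
    (β := b - (κ - 2 * α)) (by linarith) (by linarith) (by linarith)
  refine ⟨C₃ * (C₂ * C₁), by positivity, fun T K g g' hT h s t hs hst ht => ?_⟩
  have hK := h.nonneg (hs.trans (hst.le.trans ht))
  have hgerm (u m v : ℝ) (hu : s ≤ u) (hum : u < m) (hmv : m < v) (hv : v ≤ t) :
      𝓑.N b (roughGerm Sg RP.X RP.X2 g g' t u v - roughGerm Sg RP.X RP.X2 g g' t u m
        - roughGerm Sg RP.X RP.X2 g g' t m v)
        ≤ C₂ * C₁ * K * ((v - u) ^ (3 * α) * (t - m) ^ (-(b - (κ - 2 * α)))) := by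
    have hu0 := hs.trans hu
    have htm : 0 < t - m := by linarith
    have hmem := (h.mem_roughDefect_and_N_le (Sg := Sg) (X2 := RP.X2) (v := v) (by linarith)
      hu0 hum.le (by linarith)).1
    rw [RP.roughGerm_defect_eq Sg g g' hu0 hum.le hmv.le (by linarith) (by linarith)]
    grw [(hS (t - m) _ htm (by linarith) hmem).2, hdefect T K g g' hT h u m v hu0 hum hmv
      (by linarith)]
    exact le_of_eq (by ring)
  obtain ⟨W, hW, hWle⟩ := hsew _ s t (C₂ * C₁ * K) hst (by positivity)
    (h.germMem_roughGerm (by linarith) (by linarith) hs ht) hgerm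
  exact ⟨W, hW, hWle.trans_eq (by ring_nf)⟩

end ControlledBound

end

section

variable {𝓑 : BanachScale} {θ η T B : ℝ} {f : ℝ → 𝓑.E} {R : ℝ → ℝ → 𝓑.E}

theorem scaleSupNorm_nonneg (𝓑 : BanachScale) (θ T : ℝ) (f : ℝ → 𝓑.E) :
    0 ≤ scaleSupNorm 𝓑 θ T f :=
  Real.sSup_nonneg (by rintro _ ⟨t, _, _, rfl⟩; exact 𝓑.N_nonneg _ _)

theorem scaleHolderNorm2_nonneg (𝓑 : BanachScale) (θ η T : ℝ) (R : ℝ → ℝ → 𝓑.E) :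
    0 ≤ scaleHolderNorm2 𝓑 θ η T R :=
  Real.sSup_nonneg <| by
    rintro _ ⟨s, t, _, hst, _, rfl⟩
    exact div_nonneg (𝓑.N_nonneg _ _) (Real.rpow_nonneg (sub_nonneg.2 hst.le) _)

theorem scaleSupNorm_le (hB : 0 ≤ B) (h : ∀ t, 0 ≤ t → t ≤ T → 𝓑.N θ (f t) ≤ B) :
    scaleSupNorm 𝓑 θ T f ≤ B :=
  Real.sSup_le (by rintro _ ⟨t, ht0, htT, rfl⟩; exact h t ht0 htT) hB

theorem scaleHolderNorm2_le (hB : 0 ≤ B)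
    (h : ∀ s t, 0 ≤ s → s < t → t ≤ T → 𝓑.N θ (R s t) ≤ B * (t - s) ^ η) :
    scaleHolderNorm2 𝓑 θ η T R ≤ B := by
  refine Real.sSup_le ?_ hB
  rintro _ ⟨s, t, hs, hst, ht, rfl⟩
  exact (div_le_iff₀ (Real.rpow_pos_of_pos (sub_pos.2 hst) _)).2 (h s t hs hst ht)

theorem N_le_scaleSupNorm_of_continuous (hf : ∀ t, 0 ≤ t → t ≤ T → 𝓑.Mem θ (f t))
    (hcont : ∀ t, 0 ≤ t → t ≤ T → ∀ ε > (0 : ℝ), ∃ δ > (0 : ℝ), ∀ s, 0 ≤ s → s ≤ T →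
      |s - t| < δ → 𝓑.N θ (f s - f t) < ε) {t : ℝ} (ht0 : 0 ≤ t) (htT : t ≤ T) :
    𝓑.N θ (f t) ≤ scaleSupNorm 𝓑 θ T f := by
  have hN : ContinuousOn (fun t => 𝓑.N θ (f t)) (Icc 0 T) := by
    refine Metric.continuousOn_iff.2 fun t ht ε hε => ?_
    obtain ⟨δ, hδ, h⟩ := hcont t ht.1 ht.2 ε hε
    refine ⟨δ, hδ, fun s hs hst => lt_of_le_of_lt ?_ (h s hs.1 hs.2 hst)⟩
    exact abs_norm_sub_norm_le (⟨f s, hf s hs.1 hs.2⟩ : 𝓑.space θ) ⟨f t, hf t ht.1 ht.2⟩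
  refine le_csSup ((isCompact_Icc.bddAbove_image hN).mono ?_) ⟨t, ht0, htT, rfl⟩
  rintro _ ⟨s, hs0, hsT, rfl⟩
  exact ⟨s, ⟨hs0, hsT⟩, rfl⟩

theorem N_le_scaleHolderNorm2_mul
    (h : ∃ C : ℝ, ∀ s t, 0 ≤ s → s ≤ t → t ≤ T → 𝓑.N θ (R s t) ≤ C * (t - s) ^ η)
    {s t : ℝ} (hs : 0 ≤ s) (hst : s < t) (ht : t ≤ T) :
    𝓑.N θ (R s t) ≤ scaleHolderNorm2 𝓑 θ η T R * (t - s) ^ η := by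
  obtain ⟨C, hC⟩ := h
  rw [← div_le_iff₀ (Real.rpow_pos_of_pos (sub_pos.2 hst) _)]
  refine le_csSup ⟨C, ?_⟩ ⟨s, t, hs, hst, ht, rfl⟩
  rintro _ ⟨r, u, hr, hru, hu, rfl⟩
  exact (div_le_iff₀ (Real.rpow_pos_of_pos (sub_pos.2 hru) _)).2 (hC r u hr hru.le hu)

end

section

open BanachScale

variable {𝓑 : BanachScale} {α σ γ T Tm : ℝ} {X : ℝ → ℝ} {y y' : ℝ → 𝓑.E}

theorem crpNorm_nonneg (𝓑 : BanachScale) (α γ T : ℝ) (X : ℝ → ℝ) (y y' : ℝ → 𝓑.E) :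
    0 ≤ crpNorm 𝓑 α γ T X y y' := by
  have hsup := scaleSupNorm_nonneg 𝓑
  have hholder := scaleHolderNorm2_nonneg 𝓑
  exact add_nonneg (add_nonneg (add_nonneg (add_nonneg (hsup _ _ _) (hsup _ _ _))
    (hholder _ _ _ _)) (hholder _ _ _ _)) (hholder _ _ _ _)

theorem crpNorm_le {B : ℝ} (hB : 0 ≤ B) (hy : ∀ t, 0 ≤ t → t ≤ T → 𝓑.N γ (y t) ≤ B)
    (hy' : ∀ t, 0 ≤ t → t ≤ T → 𝓑.N (γ - α) (y' t) ≤ B)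
    (hδy' : ∀ s t, 0 ≤ s → s < t → t ≤ T → 𝓑.N (γ - 2 * α) (y' t - y' s) ≤ B * (t - s) ^ α)
    (hRα : ∀ s t, 0 ≤ s → s < t → t ≤ T →
      𝓑.N (γ - α) (gubRemainder 𝓑 X y y' s t) ≤ B * (t - s) ^ α)
    (hR2α : ∀ s t, 0 ≤ s → s < t → t ≤ T →
      𝓑.N (γ - 2 * α) (gubRemainder 𝓑 X y y' s t) ≤ B * (t - s) ^ (2 * α)) :
    crpNorm 𝓑 α γ T X y y' ≤ 5 * B := by
  have h₁ := scaleSupNorm_le hB hy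
  have h₂ := scaleSupNorm_le hB hy'
  have h₃ : scaleHolderNorm 𝓑 (γ - 2 * α) α T y' ≤ B := scaleHolderNorm2_le hB hδy'
  have h₄ := scaleHolderNorm2_le hB hRα
  have h₅ := scaleHolderNorm2_le hB hR2α
  rw [crpNorm]
  linarith

theorem norms_le_crpNorm (𝓑 : BanachScale) (α γ T : ℝ) (X : ℝ → ℝ) (y y' : ℝ → 𝓑.E) :
    scaleSupNorm 𝓑 γ T y ≤ crpNorm 𝓑 α γ T X y y' ∧
      scaleSupNorm 𝓑 (γ - α) T y' ≤ crpNorm 𝓑 α γ T X y y' ∧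
      scaleHolderNorm2 𝓑 (γ - α) α T (gubRemainder 𝓑 X y y') ≤ crpNorm 𝓑 α γ T X y y' ∧
      scaleHolderNorm2 𝓑 (γ - 2 * α) (2 * α) T (gubRemainder 𝓑 X y y')
        ≤ crpNorm 𝓑 α γ T X y y' := by
  have h₁ := scaleSupNorm_nonneg 𝓑 γ T y
  have h₂ := scaleSupNorm_nonneg 𝓑 (γ - α) T y'
  have h₃ : 0 ≤ scaleHolderNorm 𝓑 (γ - 2 * α) α T y' := scaleHolderNorm2_nonneg 𝓑 _ _ _ _
  have h₄ := scaleHolderNorm2_nonneg 𝓑 (γ - α) α T (gubRemainder 𝓑 X y y')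
  have h₅ := scaleHolderNorm2_nonneg 𝓑 (γ - 2 * α) (2 * α) T (gubRemainder 𝓑 X y y')
  rw [crpNorm]
  refine ⟨?_, ?_, ?_, ?_⟩ <;> linarith

theorem N_increment_le {θ s t A B c p : ℝ} (hyt : 𝓑.Mem θ (y t)) (hys : 𝓑.Mem θ (y s))
    (hy's : 𝓑.Mem θ (y' s)) (hX : |X t - X s| ≤ c * p)
    (hR : 𝓑.N θ (gubRemainder 𝓑 X y y' s t) ≤ B * p) (hA : 𝓑.N θ (y' s) ≤ A) :
    𝓑.N θ (y t - y s) ≤ (B + c * A) * p := by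
  have hcp : 0 ≤ c * p := (abs_nonneg _).trans hX
  calc 𝓑.N θ (y t - y s)
    _ ≤ 𝓑.N θ (gubRemainder 𝓑 X y y' s t) + 𝓑.N θ ((X t - X s) • y' s) :=
      N_le_N_sub_add (mem_sub hyt hys) (𝓑.mem_smul _ _ _ hy's)
    _ ≤ B * p + c * p * A := by
      rw [𝓑.N_smul]
      gcongr
      exact 𝓑.N_nonneg _ _
    _ = (B + c * A) * p := by ring

/-- `K` bounds `y` in `B_γ`, its increments in `B_{γ-α}` and the remainder of `(y, G(y))` in
`B_{γ-2α}`, on `[0, T]`. -/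
structure PathBound (𝓑 : BanachScale) (α γ T : ℝ) (X : ℝ → ℝ) (G : 𝓑.E → 𝓑.E) (y : ℝ → 𝓑.E)
    (K : ℝ) : Prop where
  mem : ∀ t, 0 ≤ t → t ≤ T → 𝓑.Mem γ (y t)
  bound : ∀ t, 0 ≤ t → t ≤ T → 𝓑.N γ (y t) ≤ K
  bound_increment : ∀ s t, 0 ≤ s → s < t → t ≤ T → 𝓑.N (γ - α) (y t - y s) ≤ K * (t - s) ^ α
  bound_remainder : ∀ s t, 0 ≤ s → s < t → t ≤ T →
    𝓑.N (γ - 2 * α) (gubRemainder 𝓑 X y (fun r => G (y r)) s t) ≤ K * (t - s) ^ (2 * α)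

theorem IsControlledPath.exists_pathBound (RP : RoughPath α Tm) (𝓑 : BanachScale) (γ : ℝ)
    (hα : 0 ≤ α) :
    ∃ C > 0, ∀ (T : ℝ) (G : 𝓑.E → 𝓑.E) (y : ℝ → 𝓑.E), T ≤ Tm →
      IsControlledPath 𝓑 α γ T RP.X y (fun t => G (y t)) →
      PathBound 𝓑 α γ T RP.X G y (C * crpNorm 𝓑 α γ T RP.X y fun t => G (y t)) := by
  obtain ⟨c, hc, hX⟩ := RP.exists_bound
  refine ⟨1 + c, by positivity, fun T G y hT h => ?_⟩
  obtain ⟨hy, hy', hRα, hR2α⟩ := norms_le_crpNorm 𝓑 α γ T RP.X y fun t => G (y t)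
  set K := crpNorm 𝓑 α γ T RP.X y fun t => G (y t)
  have hK : K ≤ (1 + c) * K := by
    have : 0 ≤ K := crpNorm_nonneg _ _ _ _ _ _ _
    nlinarith
  have hmem (t : ℝ) (ht0 : 0 ≤ t) (htT : t ≤ T) : 𝓑.Mem (γ - α) (y t) :=
    𝓑.mem_mono (sub_le_self γ hα) _ (h.mem_y t ht0 htT)
  refine ⟨h.mem_y, fun t ht0 htT => ?_, fun s t hs hst ht => ?_, fun s t hs hst ht => ?_⟩
  · exact (N_le_scaleSupNorm_of_continuous h.mem_y h.cont_y ht0 htT).trans (hy.trans hK)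
  · have hp : 0 ≤ (t - s) ^ α := Real.rpow_nonneg (sub_nonneg.2 hst.le) _
    have hsT := hst.le.trans ht
    have := N_increment_le (hmem t (hs.trans hst.le) ht) (hmem s hs hsT) (h.mem_y' s hs hsT)
      (hX s t hs hst.le (ht.trans hT)).1
      ((N_le_scaleHolderNorm2_mul h.rem_alpha hs hst ht).trans
        (mul_le_mul_of_nonneg_right hRα hp))
      ((N_le_scaleSupNorm_of_continuous h.mem_y' h.cont_y' hs hsT).trans hy')
    linarith
  · have hp : 0 ≤ (t - s) ^ (2 * α) := Real.rpow_nonneg (sub_nonneg.2 hst.le) _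
    grw [N_le_scaleHolderNorm2_mul h.rem_two_alpha hs hst ht, hR2α, ← hK]

namespace PathBound

variable {G : 𝓑.E → 𝓑.E} {DG : 𝓑.E → 𝓑.E →ₗ[ℝ] 𝓑.E} {K : ℝ}

theorem nonneg (h : PathBound 𝓑 α γ T X G y K) (hT : 0 ≤ T) : 0 ≤ K :=
  (𝓑.N_nonneg _ _).trans (h.bound 0 le_rfl hT)

theorem exists_controlledBound (RP : RoughPath α Tm) (hα : 0 ≤ α) (hσα : σ ≤ α)
    (hG : IsC1Diffusion 𝓑 α σ γ G DG) :
    ∃ C > 0, ∀ (T K : ℝ) (y : ℝ → 𝓑.E), 0 ≤ T → T ≤ Tm → PathBound 𝓑 α γ T RP.X G y K →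
      ControlledBound 𝓑 α (γ - σ) T RP.X (fun t => G (y t)) (fun t => DG (y t) (G (y t)))
        (C * (1 + K)) := by
  obtain ⟨c, hc, hX⟩ := RP.exists_bound
  obtain ⟨C₁, hC₁, hGC⟩ := hG.hasLinearGrowth.exists_bound
  have hDG := hG.hasLinearGrowth_deriv_apply hσα hα
  obtain ⟨C₂, hC₂, hDGC⟩ := hDG.exists_bound
  obtain ⟨C₃, hC₃, hrem⟩ := hG.exists_N_remainder_le hσα hα
  obtain ⟨L, hDGG⟩ := hG.exists_hasBoundedDeriv_deriv_apply
  obtain ⟨C₄, hC₄, hlip⟩ := hDGG.exists_N_sub_le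
  refine ⟨C₁ + C₂ + C₃ * (1 + c) + C₄, by positivity, fun T K y hT0 hT h => ?_⟩
  set C := C₁ + C₂ + C₃ * (1 + c) + C₄
  have hK := h.nonneg hT0
  have hC₃c : 0 < C₃ * (1 + c) := by positivity
  have hmem (t : ℝ) (ht0 : 0 ≤ t) (htT : t ≤ T) : 𝓑.Mem (γ - α) (y t) :=
    𝓑.mem_mono (sub_le_self γ hα) _ (h.mem t ht0 htT)
  have hκα : γ - σ - α = γ - α - σ := by ring
  have hκ2α : γ - σ - 2 * α = γ - 2 * α - σ := by ring
  constructor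
  · exact fun t ht0 htT => hG.hasLinearGrowth.maps _ (h.mem t ht0 htT)
  · exact fun t ht0 htT => hκα ▸ hDG.maps _ (h.mem t ht0 htT)
  · intro t ht0 htT
    grw [hGC _ (h.mem t ht0 htT), h.bound t ht0 htT]
    gcongr; linarith
  · intro t ht0 htT
    rw [hκα]
    grw [hDGC _ (h.mem t ht0 htT), h.bound t ht0 htT]
    gcongr; linarith
  · intro s t hs hst ht
    have hp : 0 ≤ (t - s) ^ α := Real.rpow_nonneg (sub_nonneg.2 hst.le) _
    have hsq : (t - s) ^ (2 * α) = (t - s) ^ α * (t - s) ^ α := by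
      rw [← Real.rpow_add (sub_pos.2 hst), two_mul]
    rw [hκ2α, gubRemainder]
    grw [hrem _ _ _ (hmem t (hs.trans hst.le) ht) (hmem s hs (hst.le.trans ht)),
      ← gubRemainder.eq_1 𝓑 RP.X y (fun r => G (y r)), h.bound_remainder s t hs hst ht,
      h.bound_increment s t hs hst ht, (hX s t hs hst.le (ht.trans hT)).1]
    calc _ = C₃ * (1 + c) * K * (t - s) ^ (2 * α) := by rw [hsq]; ring
      _ ≤ _ := by gcongr <;> linarith
  · intro s t hs hst ht
    rw [hκ2α]
    have : 0 ≤ (t - s) ^ α := Real.rpow_nonneg (sub_nonneg.2 hst.le) _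
    grw [hlip _ _ (hmem t (hs.trans hst.le) ht) (hmem s hs (hst.le.trans ht)),
      h.bound_increment s t hs hst ht]
    rw [← mul_assoc]
    gcongr <;> linarith

end PathBound

end

section

open BanachScale RPartition

variable {𝓑 : BanachScale} {α σ γ δ θ ρ s t T Tm : ℝ} {Sg : ScaleSemigroup 𝓑} {X : ℝ → ℝ}
  {X2 : ℝ → ℝ → ℝ} {F G : 𝓑.E → 𝓑.E} {DG : 𝓑.E → 𝓑.E →ₗ[ℝ] 𝓑.E} {y₀ : 𝓑.E} {y : ℝ → 𝓑.E}

theorem tendstoIn_dyadic_of_semigroup {Φ : ℝ → ℝ → ℝ → 𝓑.E} {I J : 𝓑.E}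
    (hΦS : ∀ u v, u ≤ s → Φ t u v = Sg.S (t - s) (Φ s u v)) (hs : 0 < s) (hst : s < t)
    (hI : IsPartitionLimit 𝓑 θ (Φ s) 0 s I) (hJ : IsPartitionLimit 𝓑 θ (Φ t) 0 t J)
    (hΦs : GermMem 𝓑 θ (Φ s) 0 s) (hΦt : GermMem 𝓑 θ (Φ t) 0 t) :
    TendstoIn 𝓑 θ (fun n => (dyadic hst n).sum (Φ t)) (J - Sg.S (t - s) I) :=
  have hts := sub_pos.2 hst
  let ⟨_, _, hS⟩ := Sg.exists_N_le_mul θ hts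
  hI.tendstoIn_dyadic_of_map (hS (t - s) hts.le le_rfl) hs hst hJ hΦs hΦt
    fun u v _ huv hv => hΦS u v (huv.le.trans hv)

theorem IsSolution.exists_restart (h : IsSolution 𝓑 Sg α γ X X2 F G DG y₀ T y)
    (hD : ∀ t ≤ T, GermMem 𝓑 γ (driftGerm Sg (fun r => F (y r)) t) 0 t)
    (hZ : ∀ t ≤ T, GermMem 𝓑 (γ - 2 * α)
      (roughGerm Sg X X2 (fun r => G (y r)) (fun r => DG (y r) (G (y r))) t) 0 t)
    (hs : 0 ≤ s) (hst : s < t) (ht : t ≤ T) : ∃ D Z,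
      TendstoIn 𝓑 γ (fun n => (dyadic hst n).sum (driftGerm Sg (fun r => F (y r)) t)) D ∧
      TendstoIn 𝓑 (γ - 2 * α) (fun n => (dyadic hst n).sum
        (roughGerm Sg X X2 (fun r => G (y r)) (fun r => DG (y r) (G (y r))) t)) Z ∧
      y t = Sg.S (t - s) (y s) + D + Z := by
  obtain ⟨Dt, Zt, hDt, hZt, hyt⟩ := h.mild t (hs.trans_lt hst) ht
  rcases hs.eq_or_lt with rfl | hs
  · have hmesh := tendsto_mesh_dyadic hst
    change IsPartitionLimit 𝓑 γ (driftGerm Sg (fun r => F (y r)) t) 0 t Dt at hDt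
    change IsPartitionLimit 𝓑 (γ - 2 * α)
      (roughGerm Sg X X2 (fun r => G (y r)) (fun r => DG (y r) (G (y r))) t) 0 t Zt at hZt
    refine ⟨Dt, Zt, hDt.tendstoIn (hD t ht) hmesh, hZt.tendstoIn (hZ t ht) hmesh, ?_⟩
    rw [sub_zero, h.init, hyt]
  · have hsT := hst.le.trans ht
    obtain ⟨Ds, Zs, hDs, hZs, hys⟩ := h.mild s hs hsT
    refine ⟨Dt - Sg.S (t - s) Ds, Zt - Sg.S (t - s) Zs,
      tendstoIn_dyadic_of_semigroup (fun u v hu => ?_) hs hst hDs hDt (hD s hsT) (hD t ht),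
      tendstoIn_dyadic_of_semigroup (fun u v hu => ?_) hs hst hZs hZt (hZ s hsT) (hZ t ht), ?_⟩
    · rw [driftGerm, driftGerm, map_smul, Sg.S_sub_apply hu hst.le]
    · rw [roughGerm, roughGerm, Sg.S_sub_apply hu hst.le]
    · have hSy₀ : Sg.S t y₀ = Sg.S (t - s) (Sg.S s y₀) := by
        simpa using Sg.S_sub_apply hs.le hst.le y₀
      rw [hyt, hys, hSy₀, map_add, map_add]
      abel

/-- Here `ρ` is the part of the loss `δ` of the drift that `S` has to make up for in
`B_{γ-θ}`. -/
theorem exists_N_driftIntegral_le (Sg : ScaleSemigroup 𝓑) (hF : 𝓑.HasLinearGrowth γ (γ - δ) F)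
    (hθ : 0 ≤ θ) (hρ : 0 ≤ ρ) (hρ1 : ρ < 1) (hδ : δ ≤ θ + ρ) (hTm : 0 < Tm) :
    ∃ C > 0, ∀ (y : ℝ → 𝓑.E) (s t M : ℝ) (D : 𝓑.E) (hst : s < t), t - s ≤ Tm →
      (∀ u, s ≤ u → u < t → 𝓑.Mem γ (y u)) → (∀ u, s ≤ u → u < t → 𝓑.N γ (y u) ≤ M) →
      TendstoIn 𝓑 γ (fun n => (dyadic hst n).sum (driftGerm Sg (fun r => F (y r)) t)) D →
      𝓑.N (γ - θ) D ≤ C * (1 + M) * (t - s) ^ (1 - ρ) := by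
  have hF' : 𝓑.HasLinearGrowth γ (γ - θ - ρ) F := hF.mono_right (by linarith)
  obtain ⟨C₁, hC₁, hFC⟩ := hF'.exists_bound
  obtain ⟨C₂, hC₂, hsum⟩ := exists_N_sum_driftGerm_le Sg (a := γ - θ - ρ) (b := γ - θ)
    (by linarith) (by linarith) hTm
  rw [show γ - θ - (γ - θ - ρ) = ρ by ring] at hsum
  refine ⟨C₂ * C₁, by positivity, fun y s t M D hst htm hy hyM hD => ?_⟩
  refine (hD.mono (sub_le_self γ hθ)).norm_le fun n => ?_
  rw [mul_assoc C₂]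
  refine hsum _ s t _ hst htm (fun u hu hut => hF'.maps _ (hy u hu hut)) (fun u hu hut => ?_) _
  grw [hFC _ (hy u hu hut), hyM u hu hut]

theorem PathBound.exists_N_roughIntegral_sub_le (RP : RoughPath α Tm) (Sg : ScaleSemigroup 𝓑)
    (hα : 1 / 3 < α) (hα2 : α ≤ 1 / 2) (hσ : 0 ≤ σ) (hσα : σ < α) (hTm : 0 < Tm)
    (hG : IsC1Diffusion 𝓑 α σ γ G DG) (hθ : 0 ≤ θ) (hθα : θ ≤ 2 * α) :
    ∃ C > 0, ∀ (T K : ℝ) (y : ℝ → 𝓑.E), 0 ≤ T → T ≤ Tm → PathBound 𝓑 α γ T RP.X G y K →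
      ∀ s t Z, 0 ≤ s → ∀ hst : s < t, t ≤ T →
        TendstoIn 𝓑 (γ - 2 * α) (fun n => (dyadic hst n).sum (roughGerm Sg RP.X RP.X2
          (fun r => G (y r)) (fun r => DG (y r) (G (y r))) t)) Z →
        𝓑.Mem (γ - θ) Z ∧
          𝓑.N (γ - θ) (Z - roughGerm Sg RP.X RP.X2
            (fun r => G (y r)) (fun r => DG (y r) (G (y r))) t s t)
            ≤ C * (1 + K) * (t - s) ^ (α - σ + θ) := by
  obtain ⟨C₁, hC₁, hcomp⟩ := PathBound.exists_controlledBound RP (by linarith) hσα.le hG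
  obtain ⟨C₂, hC₂, hconv⟩ := ControlledBound.exists_roughConvolution (κ := γ - σ) (b := γ - θ)
    RP Sg hα hα2 (by linarith) (by linarith) hTm
  refine ⟨C₂ * C₁, by positivity, fun T K y hT0 hT h s t Z hs hst ht hZ => ?_⟩
  obtain ⟨W, hW, hWle⟩ := hconv T _ _ _ hT (hcomp T K y hT0 hT h) s t hs hst ht
  obtain rfl := (hW.mono (by linarith)).unique hZ
  rw [show γ - σ + α - (γ - θ) = α - σ + θ by ring] at hWle
  exact ⟨hW.mem_lim, hWle.trans_eq (by ring)⟩

end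

theorem rpow_le_rpow_sub_mul_rpow {x A e f : ℝ} (hx : 0 < x) (hxA : x ≤ A) (hef : e ≤ f) :
    x ^ f ≤ A ^ (f - e) * x ^ e := by
  calc x ^ f = x ^ (f - e) * x ^ e := by rw [← Real.rpow_add hx, sub_add_cancel]
    _ ≤ A ^ (f - e) * x ^ e := by
      gcongr

theorem exists_one_add_mul_rpow_le {η e A : ℝ} (hη : 0 ≤ η) (hηe : η ≤ e) (hA : 0 < A) :
    ∃ C > 0, ∀ x T K, 0 < x → x ≤ T → T ≤ A → 0 ≤ K →
      (1 + K) * x ^ e ≤ C * (1 + T ^ η * K) := by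
  refine ⟨A ^ (e - η) * (A ^ η + 1), by positivity, fun x T K hx hxT hTA hK => ?_⟩
  have hT : 0 < T := hx.trans_le hxT
  have hTη : T ^ η ≤ A ^ η := by gcongr
  have hAη : 0 < A ^ η := by positivity
  have hTK : 0 ≤ T ^ η * K := by positivity
  calc (1 + K) * x ^ e ≤ (1 + K) * (A ^ (e - η) * T ^ η) := by
        grw [rpow_le_rpow_sub_mul_rpow hx (hxT.trans hTA) hηe, hxT]
    _ = A ^ (e - η) * (T ^ η + T ^ η * K) := by ring
    _ ≤ A ^ (e - η) * ((A ^ η + 1) * (1 + T ^ η * K)) := by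
        gcongr
        nlinarith
    _ = A ^ (e - η) * (A ^ η + 1) * (1 + T ^ η * K) := by ring

section

open BanachScale

variable {𝓑 : BanachScale} {α σ γ θ Tm : ℝ} {G : 𝓑.E → 𝓑.E}
  {DG : 𝓑.E → 𝓑.E →ₗ[ℝ] 𝓑.E}

theorem exists_N_secondOrderTerm_le (RP : RoughPath α Tm) (Sg : ScaleSemigroup 𝓑) (hα : 0 ≤ α)
    (hσα : σ ≤ α) (hθ : α + σ ≤ θ + 2) (hTm : 0 < Tm) (hG : IsC1Diffusion 𝓑 α σ γ G DG) :
    ∃ C > 0, ∀ s t x, 0 ≤ s → s < t → t ≤ Tm → 𝓑.Mem γ x →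
      𝓑.Mem (γ - θ) (RP.X2 s t • Sg.S (t - s) (DG x (G x))) ∧
        𝓑.N (γ - θ) (RP.X2 s t • Sg.S (t - s) (DG x (G x)))
          ≤ C * (1 + 𝓑.N γ x) * (t - s) ^ (2 * α - max (α + σ - θ) 0) := by
  set d := max (α + σ - θ) 0
  have hd : α + σ - θ ≤ d := le_max_left _ _
  have hd0 : 0 ≤ d := le_max_right _ _
  have hd2 : d ≤ 2 := max_le (by linarith) zero_le_two
  have hDGG := (hG.hasLinearGrowth_deriv_apply hσα hα).mono_right (b' := γ - θ - d) (by linarith)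
  obtain ⟨c, hc, hX⟩ := RP.exists_bound
  obtain ⟨C₁, hC₁, hgrowth⟩ := hDGG.exists_bound
  obtain ⟨C₂, hC₂, hS⟩ := Sg.exists_N_le_rpow_mul (a := γ - θ - d) (b := γ - θ) (by linarith)
    (by linarith) hTm
  refine ⟨c * C₂ * C₁, by positivity, fun s t x hs hst ht hx => ?_⟩
  have hts : 0 < t - s := sub_pos.2 hst
  obtain ⟨hmem, hN⟩ := hS (t - s) _ hts (by linarith) (hDGG.maps x hx)
  refine ⟨𝓑.mem_smul _ _ _ hmem, ?_⟩
  have hNx := 𝓑.N_nonneg γ x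
  rw [𝓑.N_smul]
  grw [hN, hgrowth x hx, (hX s t hs hst.le ht).2]
  rw [sub_sub_cancel, sub_eq_add_neg (2 * α), Real.rpow_add hts]
  exact le_of_eq (by ring)

theorem exists_N_roughGerm_le (RP : RoughPath α Tm) (Sg : ScaleSemigroup 𝓑) (hα1 : α ≤ 1)
    (hσ : 0 ≤ σ) (hσα : σ ≤ α) (hTm : 0 < Tm) (hG : IsC1Diffusion 𝓑 α σ γ G DG) :
    ∃ C > 0, ∀ (y : ℝ → 𝓑.E) (s t : ℝ), 0 ≤ s → s < t → t ≤ Tm → 𝓑.Mem γ (y s) →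
      𝓑.Mem γ (roughGerm Sg RP.X RP.X2 (fun r => G (y r)) (fun r => DG (y r) (G (y r))) t s t) ∧
        𝓑.N γ (roughGerm Sg RP.X RP.X2 (fun r => G (y r)) (fun r => DG (y r) (G (y r))) t s t)
          ≤ C * (1 + 𝓑.N γ (y s)) * (t - s) ^ (α - σ) := by
  obtain ⟨c, hc, hX⟩ := RP.exists_bound
  obtain ⟨C₁, hC₁, hgrowth⟩ := hG.hasLinearGrowth.exists_bound
  obtain ⟨C₂, hC₂, hS⟩ := Sg.exists_N_le_rpow_mul (sub_le_self γ hσ) (by linarith) hTm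
  obtain ⟨C₃, hC₃, hsecond⟩ := exists_N_secondOrderTerm_le RP Sg (θ := 0) (by linarith) hσα
    (by linarith) hTm hG
  rw [sub_zero, sub_zero, max_eq_left (by linarith), show 2 * α - (α + σ) = α - σ by ring]
    at hsecond
  refine ⟨c * C₂ * C₁ + C₃, by positivity, fun y s t hs hst ht hy => ?_⟩
  have hts : 0 < t - s := sub_pos.2 hst
  obtain ⟨hmem₁, hN₁⟩ := hS (t - s) _ hts (by linarith) (hG.hasLinearGrowth.maps _ hy)
  obtain ⟨hmem₂, hN₂⟩ := hsecond s t _ hs hst ht hy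
  have hmem₁' := 𝓑.mem_smul γ (RP.X t - RP.X s) _ hmem₁
  have hNy := 𝓑.N_nonneg γ (y s)
  rw [roughGerm, map_add, map_smul, map_smul]
  refine ⟨𝓑.mem_add _ _ _ hmem₁' hmem₂, ?_⟩
  grw [𝓑.N_add _ _ _ hmem₁' hmem₂, 𝓑.N_smul, hN₂, hN₁, hgrowth _ hy, (hX s t hs hst.le ht).1]
  rw [sub_sub_cancel, sub_eq_add_neg α, Real.rpow_add hts]
  exact le_of_eq (by ring)

theorem exists_N_roughGerm_sub_smul_le (RP : RoughPath α Tm) (Sg : ScaleSemigroup 𝓑)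
    (hα2 : α ≤ 1 / 2) (hσ : 0 ≤ σ) (hσα : σ ≤ α) (hαθ : α ≤ θ) (hθα : θ ≤ 2 * α) (hTm : 0 < Tm)
    (hG : IsC1Diffusion 𝓑 α σ γ G DG) :
    ∃ C > 0, ∀ (y : ℝ → 𝓑.E) (s t : ℝ), 0 ≤ s → s < t → t ≤ Tm → 𝓑.Mem γ (y s) →
      𝓑.Mem (γ - θ) (roughGerm Sg RP.X RP.X2 (fun r => G (y r))
          (fun r => DG (y r) (G (y r))) t s t - (RP.X t - RP.X s) • G (y s)) ∧
        𝓑.N (γ - θ) (roughGerm Sg RP.X RP.X2 (fun r => G (y r))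
            (fun r => DG (y r) (G (y r))) t s t - (RP.X t - RP.X s) • G (y s))
          ≤ C * (1 + 𝓑.N γ (y s)) * (t - s) ^ θ := by
  obtain ⟨c, hc, hX⟩ := RP.exists_bound
  obtain ⟨C₁, hC₁, hgrowth⟩ := hG.hasLinearGrowth.exists_bound
  obtain ⟨C₂, hC₂, hS⟩ := Sg.exists_N_sub_self_le (a := γ - θ) (b := γ - σ) (by linarith)
    (by linarith) hTm
  obtain ⟨C₃, hC₃, hsecond⟩ := exists_N_secondOrderTerm_le RP Sg (θ := θ) (by linarith) hσα
    (by linarith) hTm hG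
  set e := 2 * α - max (α + σ - θ) 0
  have he : θ ≤ e := le_sub_comm.1 (max_le (by linarith) (by linarith))
  refine ⟨c * C₂ * C₁ * Tm ^ (α - σ) + C₃ * Tm ^ (e - θ), by positivity,
    fun y s t hs hst ht hy => ?_⟩
  have hts : 0 < t - s := sub_pos.2 hst
  have htsTm : t - s ≤ Tm := by linarith
  have hGy := hG.hasLinearGrowth.maps _ hy
  have hGyθ := 𝓑.mem_mono (by linarith : γ - θ ≤ γ - σ) _ hGy
  have hmem₁ := 𝓑.mem_smul (γ - θ) (RP.X t - RP.X s) _ (mem_sub (Sg.S_mem _ _ _ hts.le hGyθ) hGyθ)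
  obtain ⟨hmem₂, hN₂⟩ := hsecond s t _ hs hst ht hy
  have hsplit : roughGerm Sg RP.X RP.X2 (fun r => G (y r)) (fun r => DG (y r) (G (y r))) t s t
      - (RP.X t - RP.X s) • G (y s) = (RP.X t - RP.X s) • (Sg.S (t - s) (G (y s)) - G (y s))
        + RP.X2 s t • Sg.S (t - s) (DG (y s) (G (y s))) := by
    rw [roughGerm, map_add, map_smul, map_smul, smul_sub]
    abel
  have hN := 𝓑.N_nonneg γ (y s)
  rw [hsplit]
  refine ⟨𝓑.mem_add _ _ _ hmem₁ hmem₂, ?_⟩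
  calc _ ≤ c * (t - s) ^ α * (C₂ * (t - s) ^ (θ - σ) * (C₁ * (1 + 𝓑.N γ (y s))))
        + C₃ * (1 + 𝓑.N γ (y s)) * (t - s) ^ e := by
        grw [𝓑.N_add _ _ _ hmem₁ hmem₂, 𝓑.N_smul, hN₂,
          hS _ _ hts htsTm hGy, hgrowth _ hy, (hX s t hs hst.le ht).1]
        rw [sub_sub_sub_cancel_left]
    _ = c * C₂ * C₁ * (1 + 𝓑.N γ (y s)) * (t - s) ^ (α - σ + θ)
        + C₃ * (1 + 𝓑.N γ (y s)) * (t - s) ^ e := by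
        rw [show α - σ + θ = α + (θ - σ) by ring, Real.rpow_add hts]
        ring
    _ ≤ c * C₂ * C₁ * (1 + 𝓑.N γ (y s)) * (Tm ^ (α - σ) * (t - s) ^ θ)
        + C₃ * (1 + 𝓑.N γ (y s)) * (Tm ^ (e - θ) * (t - s) ^ θ) := by
        gcongr
        · simpa using rpow_le_rpow_sub_mul_rpow hts htsTm (show θ ≤ α - σ + θ by linarith)
        · exact rpow_le_rpow_sub_mul_rpow hts htsTm he
    _ = _ := by ring

end

theorem BanachScale.N_add₄_le {𝓑 : BanachScale} {θ : ℝ} {v w x z : 𝓑.E} (hv : 𝓑.Mem θ v)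
    (hw : 𝓑.Mem θ w) (hx : 𝓑.Mem θ x) (hz : 𝓑.Mem θ z) :
    𝓑.N θ (v + w + x + z) ≤ 𝓑.N θ v + 𝓑.N θ w + 𝓑.N θ x + 𝓑.N θ z :=
  norm_add₄_le (a := (⟨v, hv⟩ : 𝓑.space θ)) (b := ⟨w, hw⟩) (c := ⟨x, hx⟩) (d := ⟨z, hz⟩)

section

open BanachScale

variable {𝓑 : BanachScale} {α σ γ δ η θ ρ Tm : ℝ} {F G : 𝓑.E → 𝓑.E}
  {DG : 𝓑.E → 𝓑.E →ₗ[ℝ] 𝓑.E}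

/-- Two bounds on `y` enter: a bound `M` in `B_γ` only, and a bound `K` on the whole path. The
latter comes with the extra factor `(t - s) ^ (α - σ)` that makes it small. -/
theorem IsSolution.exists_expansion (RP : RoughPath α Tm) (Sg : ScaleSemigroup 𝓑)
    (hα : 1 / 3 < α) (hα2 : α ≤ 1 / 2) (hσ : 0 ≤ σ) (hσα : σ < α) (hTm : 0 < Tm)
    (hF : 𝓑.HasLinearGrowth γ (γ - δ) F) (hG : IsC1Diffusion 𝓑 α σ γ G DG) (hθ : 0 ≤ θ)
    (hθα : θ ≤ 2 * α) (hρ : 0 ≤ ρ) (hρ1 : ρ < 1) (hδ : δ ≤ θ + ρ) :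
    ∃ C > 0, ∀ (T K M : ℝ) (y₀ : 𝓑.E) (y : ℝ → 𝓑.E), T ≤ Tm →
      PathBound 𝓑 α γ T RP.X G y K → (∀ t, 0 ≤ t → t ≤ T → 𝓑.N γ (y t) ≤ M) →
      IsSolution 𝓑 Sg α γ RP.X RP.X2 F G DG y₀ T y →
      ∀ s t, 0 ≤ s → s < t → t ≤ T → ∃ D E, 𝓑.Mem (γ - θ) D ∧ 𝓑.Mem (γ - θ) E ∧
        𝓑.N (γ - θ) D ≤ C * (1 + M) * (t - s) ^ (1 - ρ) ∧
        𝓑.N (γ - θ) E ≤ C * (1 + K) * (t - s) ^ (α - σ + θ) ∧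
        y t = Sg.S (t - s) (y s) + D + E + roughGerm Sg RP.X RP.X2 (fun r => G (y r))
          (fun r => DG (y r) (G (y r))) t s t := by
  obtain ⟨C₁, hC₁, hdrift⟩ := exists_N_driftIntegral_le Sg hF hθ hρ hρ1 hδ hTm
  obtain ⟨C₂, _, hrough⟩ := PathBound.exists_N_roughIntegral_sub_le RP Sg hα hα2 hσ hσα hTm hG
    hθ hθα
  obtain ⟨C₃, _, hcomp⟩ := PathBound.exists_controlledBound RP (by linarith) hσα.le hG
  refine ⟨max C₁ C₂, lt_max_of_lt_left hC₁, fun T K M y₀ y hT h hM hy s t hs hst ht => ?_⟩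
  have hT0 : 0 ≤ T := by linarith
  have hK := h.nonneg hT0
  have hM0 : 0 ≤ M := (𝓑.N_nonneg _ _).trans (hM 0 le_rfl hT0)
  have hgerm (b : ℝ) (hb : b ≤ γ) (r : ℝ) (hr : 0 ≤ r) (t : ℝ) (ht : t ≤ T) :=
    (hcomp T K y hT0 hT h).germMem_roughGerm (Sg := Sg) (X2 := RP.X2) (b := b) (t := t)
      (by linarith) (by linarith) hr ht
  obtain ⟨D, Z, hD, hZ, hyt⟩ := hy.exists_restart
    (fun r hr => germMem_driftGerm (a := γ - δ) (by linarith) fun u hu hur =>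
      hF.maps _ (h.mem u hu (by linarith)))
    (hgerm _ (by linarith) 0 le_rfl) hs hst ht
  obtain ⟨hZmem, hZle⟩ := hrough T K y hT0 hT h s t Z hs hst ht hZ
  have hDle := hdrift y s t M D hst (by linarith)
    (fun u hu hut => h.mem u (by linarith) (by linarith))
    (fun u hu hut => hM u (by linarith) (by linarith)) hD
  refine ⟨D, _, 𝓑.mem_mono (sub_le_self γ hθ) _ hD.mem_lim,
    mem_sub hZmem (hgerm _ (by linarith) s hs t ht s t le_rfl hst le_rfl), hDle.trans ?_,
    hZle.trans ?_, by rw [hyt, add_assoc _ (Z - _), sub_add_cancel]⟩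
  · gcongr; exact le_max_left C₁ C₂
  · gcongr; exact le_max_right C₁ C₂

theorem IsSolution.exists_N_le (RP : RoughPath α Tm) (Sg : ScaleSemigroup 𝓑) (hα : 1 / 3 < α)
    (hα2 : α ≤ 1 / 2) (hσ : 0 ≤ σ) (hσα : σ < α) (hδ : 0 ≤ δ) (hδ1 : δ < 1) (hη : 0 ≤ η)
    (hηα : η ≤ α - σ) (hηδ : η ≤ 1 - δ) (hTm : 0 < Tm)
    (hF : 𝓑.HasLinearGrowth γ (γ - δ) F) (hG : IsC1Diffusion 𝓑 α σ γ G DG) :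
    ∃ C > 0, ∀ (T K : ℝ) (y₀ : 𝓑.E) (y : ℝ → 𝓑.E), T ≤ Tm →
      PathBound 𝓑 α γ T RP.X G y K → IsSolution 𝓑 Sg α γ RP.X RP.X2 F G DG y₀ T y →
      ∀ t, 0 ≤ t → t ≤ T → 𝓑.N γ (y t) ≤ C * (1 + 𝓑.N γ y₀ + T ^ η * K) := by
  obtain ⟨C₁, hC₁, hS⟩ := Sg.exists_N_le_mul γ hTm
  obtain ⟨C₂, hC₂, hexp⟩ := IsSolution.exists_expansion RP Sg hα hα2 hσ hσα hTm hF hG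
    (θ := 0) le_rfl (by linarith) hδ hδ1 (by linarith)
  obtain ⟨C₃, hC₃, hgerm⟩ := exists_N_roughGerm_le RP Sg (by linarith) hσ hσα.le hTm hG
  obtain ⟨A₁, hA₁, hδη⟩ := exists_one_add_mul_rpow_le hη hηδ hTm
  obtain ⟨A₂, hA₂, hση⟩ := exists_one_add_mul_rpow_le hη hηα hTm
  rw [sub_zero, add_zero] at hexp
  refine ⟨1 + C₁ + C₂ * A₁ + C₂ * A₂ + C₃ * A₂, by positivity,
    fun T K y₀ y hT h hy t ht0 htT => ?_⟩
  obtain rfl := hy.init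
  have hT0 : 0 ≤ T := ht0.trans htT
  have hK := h.nonneg hT0
  have hN := 𝓑.N_nonneg γ (y 0)
  have hTK : 0 ≤ T ^ η * K := by positivity
  set Y := 1 + 𝓑.N γ (y 0) + T ^ η * K
  have hNY : 𝓑.N γ (y 0) ≤ Y := by linarith
  rcases ht0.eq_or_lt with rfl | ht
  · have hC : 0 < C₁ + C₂ * A₁ + C₂ * A₂ + C₃ * A₂ := by positivity
    exact hNY.trans (le_mul_of_one_le_left (by positivity) (by linarith))
  have hmem := h.mem 0 le_rfl hT0
  have hN0K := h.bound 0 le_rfl hT0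
  obtain ⟨hSmem, hSN⟩ := hS t ht0 (htT.trans hT) _ hmem
  obtain ⟨D, E, hD, hE, hDN, hEN, hyt⟩ := hexp T K K _ y hT h h.bound hy 0 t le_rfl ht htT
  obtain ⟨hΞ, hΞN⟩ := hgerm y 0 t le_rfl ht (htT.trans hT) hmem
  rw [sub_zero] at hDN hEN hΞN hyt
  grw [hN0K] at hΞN
  rw [hyt]
  calc _ ≤ C₁ * 𝓑.N γ (y 0) + C₂ * (1 + K) * t ^ (1 - δ) + C₂ * (1 + K) * t ^ (α - σ)
        + C₃ * (1 + K) * t ^ (α - σ) := by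
        grw [N_add₄_le hSmem hD hE hΞ, hSN, hDN, hEN, hΞN]
    _ = C₁ * 𝓑.N γ (y 0) + C₂ * ((1 + K) * t ^ (1 - δ))
        + (C₂ + C₃) * ((1 + K) * t ^ (α - σ)) := by ring
    _ ≤ C₁ * Y + C₂ * (A₁ * Y) + (C₂ + C₃) * (A₂ * Y) := by
        grw [hδη t T K ht htT hT hK, hση t T K ht htT hT hK, hNY,
          show 1 + T ^ η * K ≤ Y by linarith]
    _ ≤ (1 + C₁ + C₂ * A₁ + C₂ * A₂ + C₃ * A₂) * Y := by linarith

theorem IsSolution.exists_N_gubRemainder_le (RP : RoughPath α Tm) (Sg : ScaleSemigroup 𝓑)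
    (hα : 1 / 3 < α) (hα2 : α ≤ 1 / 2) (hσ : 0 ≤ σ) (hσα : σ < α) (hδ1 : δ < 1) (hη : 0 ≤ η)
    (hηα : η ≤ α - σ) (hαθ : α ≤ θ) (hθα : θ ≤ 2 * α) (hTm : 0 < Tm)
    (hF : 𝓑.HasLinearGrowth γ (γ - δ) F) (hG : IsC1Diffusion 𝓑 α σ γ G DG) :
    ∃ C > 0, ∀ (T K M : ℝ) (y₀ : 𝓑.E) (y : ℝ → 𝓑.E), T ≤ Tm →
      PathBound 𝓑 α γ T RP.X G y K → (∀ t, 0 ≤ t → t ≤ T → 𝓑.N γ (y t) ≤ M) →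
      IsSolution 𝓑 Sg α γ RP.X RP.X2 F G DG y₀ T y →
      ∀ s t, 0 ≤ s → s < t → t ≤ T →
        𝓑.N (γ - θ) (gubRemainder 𝓑 RP.X y (fun r => G (y r)) s t)
          ≤ C * (1 + M + T ^ η * K) * (t - s) ^ θ := by
  set ρ := max (δ - θ) 0
  have hδρ : δ - θ ≤ ρ := le_max_left _ _
  have hρθ : ρ ≤ 1 - θ := max_le (by linarith) (by linarith)
  obtain ⟨C₁, hC₁, hS⟩ := Sg.exists_N_sub_self_le (a := γ - θ) (b := γ) (by linarith)
    (by linarith) hTm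
  obtain ⟨C₂, hC₂, hexp⟩ := IsSolution.exists_expansion RP Sg hα hα2 hσ hσα hTm hF hG (θ := θ)
    (ρ := ρ) (by linarith) hθα (le_max_right _ _) (by linarith) (by linarith)
  obtain ⟨C₃, hC₃, hgerm⟩ := exists_N_roughGerm_sub_smul_le RP Sg hα2 hσ hσα.le hαθ hθα hTm hG
  obtain ⟨A, hA, hση⟩ := exists_one_add_mul_rpow_le hη hηα hTm
  rw [sub_sub_cancel] at hS
  refine ⟨C₁ + C₂ * Tm ^ (1 - ρ - θ) + C₂ * A + C₃, by positivity,
    fun T K M y₀ y hT h hM hy s t hs hst ht => ?_⟩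
  have hts : 0 < t - s := sub_pos.2 hst
  have hT0 : 0 < T := by linarith
  have hK := h.nonneg hT0.le
  have hM0 : 0 ≤ M := (𝓑.N_nonneg _ _).trans (hM 0 le_rfl hT0.le)
  have hTK : 0 ≤ T ^ η * K := by positivity
  set Y := 1 + M + T ^ η * K
  have hsT : s ≤ T := hst.le.trans ht
  have hys := h.mem s hs hsT
  have hysθ := 𝓑.mem_mono (by linarith : γ - θ ≤ γ) _ hys
  obtain ⟨D, E, hD, hE, hDN, hEN, hyt⟩ := hexp T K M _ y hT h hM hy s t hs hst ht
  obtain ⟨hΞ, hΞN⟩ := hgerm y s t hs hst (ht.trans hT) hys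
  rw [gubRemainder, hyt, show ∀ a b c d e f : 𝓑.E, a + b + c + d - e - f
    = a - e + b + c + (d - f) by intros; abel]
  calc _ ≤ C₁ * (t - s) ^ θ * M + C₂ * (1 + M) * (t - s) ^ (1 - ρ)
        + C₂ * (1 + K) * (t - s) ^ (α - σ + θ) + C₃ * (1 + M) * (t - s) ^ θ := by
        grw [N_add₄_le (mem_sub (Sg.S_mem _ _ _ hts.le hysθ) hysθ) hD hE hΞ, hDN, hEN, hΞN,
          hS _ _ hts (by linarith) hys, hM s hs hsT]
    _ ≤ C₁ * (t - s) ^ θ * M + C₂ * (1 + M) * (Tm ^ (1 - ρ - θ) * (t - s) ^ θ)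
        + C₂ * (A * (1 + T ^ η * K)) * (t - s) ^ θ + C₃ * (1 + M) * (t - s) ^ θ := by
        grw [rpow_le_rpow_sub_mul_rpow hts (by linarith : t - s ≤ Tm)
          (by linarith : θ ≤ 1 - ρ), ← hση (t - s) T K hts (by linarith) hT hK,
          Real.rpow_add hts]
        exact le_of_eq (by ring)
    _ = (C₁ * M + C₂ * Tm ^ (1 - ρ - θ) * (1 + M) + C₂ * A * (1 + T ^ η * K) + C₃ * (1 + M))
        * (t - s) ^ θ := by ring
    _ ≤ (C₁ * Y + C₂ * Tm ^ (1 - ρ - θ) * Y + C₂ * A * Y + C₃ * Y) * (t - s) ^ θ := by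
        gcongr <;> linarith
    _ = _ := by ring

end

section

open BanachScale

variable {𝓑 : BanachScale} {α σ γ δ η Tm : ℝ} {F G : 𝓑.E → 𝓑.E} {DG : 𝓑.E → 𝓑.E →ₗ[ℝ] 𝓑.E}

namespace IsC1Diffusion

theorem exists_N_comp_sub_le (RP : RoughPath α Tm) (hα : 0 ≤ α) (hσα : σ ≤ α)
    (hG : IsC1Diffusion 𝓑 α σ γ G DG) :
    ∃ C > 0, ∀ (y : ℝ → 𝓑.E) (s t B : ℝ), 0 ≤ s → s < t → t ≤ Tm →
      𝓑.Mem γ (y s) → 𝓑.Mem γ (y t) → 𝓑.N γ (y s) ≤ B →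
      𝓑.N (γ - α) (gubRemainder 𝓑 RP.X y (fun r => G (y r)) s t) ≤ B * (t - s) ^ α →
      𝓑.N (γ - 2 * α) (G (y t) - G (y s)) ≤ C * (1 + B) * (t - s) ^ α := by
  obtain ⟨c, hc, hX⟩ := RP.exists_bound
  have hGγ : 𝓑.HasLinearGrowth γ (γ - α) G := hG.hasLinearGrowth.mono_right (by linarith)
  obtain ⟨C₁, hC₁, hgrowth⟩ := hGγ.exists_bound
  have hGα := hG.hasBoundedDeriv α (by simp)
  obtain ⟨C₂, hC₂, hlip⟩ := hGα.exists_N_sub_le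
  obtain ⟨C₃, hC₃, hemb⟩ := 𝓑.exists_N_le_of_le (show γ - 2 * α ≤ γ - α - σ by linarith)
  refine ⟨C₃ * (C₂ * (1 + c * C₁)), by positivity, fun y s t B hs hst ht hs_mem ht_mem hB hR => ?_⟩
  have hys := 𝓑.mem_mono (sub_le_self γ hα) _ hs_mem
  have hyt := 𝓑.mem_mono (sub_le_self γ hα) _ ht_mem
  have hGs : 𝓑.N (γ - α) (G (y s)) ≤ C₁ * (1 + B) := by grw [hgrowth _ hs_mem, hB]
  have hinc := N_increment_le hyt hys (hGγ.maps _ hs_mem) (hX s t hs hst.le ht).1 hR hGs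
  have hp := Real.rpow_nonneg (sub_nonneg.2 hst.le) α
  grw [(hemb _ (mem_sub (hGα.maps _ hyt) (hGα.maps _ hys))).2, hlip _ _ hyt hys, hinc,
    show B + c * (C₁ * (1 + B)) ≤ (1 + c * C₁) * (1 + B) by linarith]
  exact le_of_eq (by ring)

theorem exists_crpNorm_le (RP : RoughPath α Tm) (hα : 0 ≤ α) (hσα : σ ≤ α)
    (hG : IsC1Diffusion 𝓑 α σ γ G DG) :
    ∃ C > 0, ∀ (T B : ℝ) (y : ℝ → 𝓑.E), 0 ≤ T → T ≤ Tm →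
      (∀ t, 0 ≤ t → t ≤ T → 𝓑.Mem γ (y t)) → (∀ t, 0 ≤ t → t ≤ T → 𝓑.N γ (y t) ≤ B) →
      (∀ θ ∈ ({α, 2 * α} : Set ℝ), ∀ s t, 0 ≤ s → s < t → t ≤ T →
        𝓑.N (γ - θ) (gubRemainder 𝓑 RP.X y (fun r => G (y r)) s t) ≤ B * (t - s) ^ θ) →
      crpNorm 𝓑 α γ T RP.X y (fun t => G (y t)) ≤ C * (1 + B) := by
  have hGγ : 𝓑.HasLinearGrowth γ (γ - α) G := hG.hasLinearGrowth.mono_right (by linarith)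
  obtain ⟨C₁, hC₁, hgrowth⟩ := hGγ.exists_bound
  obtain ⟨C₂, hC₂, hholder⟩ := hG.exists_N_comp_sub_le RP hα hσα
  refine ⟨5 * (1 + C₁ + C₂), by positivity, fun T B y hT0 hT hmem hy hR => ?_⟩
  have hB : 0 ≤ B := (𝓑.N_nonneg _ _).trans (hy 0 le_rfl hT0)
  have h₀ : B ≤ (1 + C₁ + C₂) * (1 + B) := by nlinarith
  have h₁ : C₁ * (1 + B) ≤ (1 + C₁ + C₂) * (1 + B) := by gcongr; linarith
  have h₂ : C₂ * (1 + B) ≤ (1 + C₁ + C₂) * (1 + B) := by gcongr; linarith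
  have hRα := hR α (by simp)
  have hR2α := hR (2 * α) (by simp)
  rw [mul_assoc]
  refine crpNorm_le (by positivity) (fun t ht0 htT => (hy t ht0 htT).trans h₀)
    (fun t ht0 htT => ?_) (fun s t hs hst ht => ?_) (fun s t hs hst ht => ?_)
    fun s t hs hst ht => ?_
  · grw [hgrowth _ (hmem t ht0 htT), hy t ht0 htT, h₁]
  · have hp := Real.rpow_nonneg (sub_nonneg.2 hst.le) α
    have hsT := hst.le.trans ht
    grw [hholder y s t B hs hst (ht.trans hT) (hmem s hs hsT) (hmem t (hs.trans hst.le) ht)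
      (hy s hs hsT) (hRα s t hs hst ht), h₂]
  · have hp := Real.rpow_nonneg (sub_nonneg.2 hst.le) α
    grw [hRα s t hs hst ht, ← h₀]
  · have hp := Real.rpow_nonneg (sub_nonneg.2 hst.le) (2 * α)
    grw [hR2α s t hs hst ht, ← h₀]

end IsC1Diffusion

theorem IsSolution.exists_N_le_and_N_gubRemainder_le (RP : RoughPath α Tm)
    (Sg : ScaleSemigroup 𝓑) (hα : 1 / 3 < α) (hα2 : α ≤ 1 / 2) (hσ : 0 ≤ σ) (hσα : σ < α)
    (hδ : 0 ≤ δ) (hδ1 : δ < 1) (hη : 0 ≤ η) (hηα : η ≤ α - σ) (hηδ : η ≤ 1 - δ) (hTm : 0 < Tm)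
    (hF : 𝓑.HasLinearGrowth γ (γ - δ) F) (hG : IsC1Diffusion 𝓑 α σ γ G DG) :
    ∃ C > 0, ∀ (T K : ℝ) (y₀ : 𝓑.E) (y : ℝ → 𝓑.E), 0 ≤ T → T ≤ Tm →
      PathBound 𝓑 α γ T RP.X G y K → IsSolution 𝓑 Sg α γ RP.X RP.X2 F G DG y₀ T y →
      (∀ t, 0 ≤ t → t ≤ T → 𝓑.N γ (y t) ≤ C * (1 + 𝓑.N γ y₀ + T ^ η * K)) ∧
      ∀ θ ∈ ({α, 2 * α} : Set ℝ), ∀ s t, 0 ≤ s → s < t → t ≤ T →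
        𝓑.N (γ - θ) (gubRemainder 𝓑 RP.X y (fun r => G (y r)) s t)
          ≤ C * (1 + 𝓑.N γ y₀ + T ^ η * K) * (t - s) ^ θ := by
  obtain ⟨C₀, hC₀, hsup⟩ := IsSolution.exists_N_le RP Sg hα hα2 hσ hσα hδ hδ1 hη hηα hηδ hTm hF hG
  have hrem (θ : ℝ) (h : α ≤ θ) (h' : θ ≤ 2 * α) := IsSolution.exists_N_gubRemainder_le RP Sg hα
    hα2 hσ hσα hδ1 hη hηα h h' hTm hF hG
  obtain ⟨C₁, hC₁, hRα⟩ := hrem α le_rfl (by linarith)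
  obtain ⟨C₂, hC₂, hR2α⟩ := hrem (2 * α) (by linarith) le_rfl
  refine ⟨C₀ + (C₁ + C₂) * (1 + C₀), by positivity, fun T K y₀ y hT0 hT h hy => ?_⟩
  have hTK : 0 ≤ T ^ η * K := mul_nonneg (Real.rpow_nonneg hT0 η) (h.nonneg hT0)
  have hy₀ := 𝓑.N_nonneg γ y₀
  set W := 1 + 𝓑.N γ y₀ + T ^ η * K
  have hW : 0 ≤ W := by positivity
  have hsupW := hsup T K y₀ y hT h hy
  have hle {c : ℝ} (hcC : c ≤ C₁ + C₂) :
      c * (1 + C₀ * W + T ^ η * K) ≤ (C₀ + (C₁ + C₂) * (1 + C₀)) * W :=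
    calc c * (1 + C₀ * W + T ^ η * K) ≤ (C₁ + C₂) * ((1 + C₀) * W) := by
          gcongr
          linarith
      _ ≤ (C₀ + (C₁ + C₂) * (1 + C₀)) * W := by linarith [mul_nonneg hC₀.le hW]
  refine ⟨fun t ht0 htT => (hsupW t ht0 htT).trans ?_, ?_⟩
  · gcongr
    linarith [show 0 < (C₁ + C₂) * (1 + C₀) by positivity]
  rintro θ (rfl | rfl) s t hs hst ht
  · have hp := Real.rpow_nonneg (sub_nonneg.2 hst.le) θ
    grw [hRα T K _ y₀ y hT h hsupW hy s t hs hst ht, hle (by linarith)]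
  · have hp := Real.rpow_nonneg (sub_nonneg.2 hst.le) (2 * α)
    grw [hR2α T K _ y₀ y hT h hsupW hy s t hs hst ht, hle (by linarith)]

theorem statement13_general (RP : RoughPath α Tm) (Sg : ScaleSemigroup 𝓑) (hα : 1 / 3 < α)
    (hα2 : α ≤ 1 / 2) (hσ : 0 ≤ σ) (hσα : σ < α) (hδ : 0 ≤ δ) (hδ1 : δ < 1) (hTm : 0 < Tm)
    (hF : 𝓑.HasLinearGrowth γ (γ - δ) F) (hG : IsC1Diffusion 𝓑 α σ γ G DG) :
    ∃ C > 0, ∀ T : ℝ, 0 < T → T ≤ Tm → ∀ (y₀ : 𝓑.E) (y : ℝ → 𝓑.E),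
      IsSolution 𝓑 Sg α γ RP.X RP.X2 F G DG y₀ T y →
      crpNorm 𝓑 α γ T RP.X y (fun t => G (y t))
        ≤ C * (1 + 𝓑.N γ y₀
            + T ^ min (α - σ) (1 - δ) * crpNorm 𝓑 α γ T RP.X y (fun t => G (y t))) := by
  set η := min (α - σ) (1 - δ)
  have hη : 0 ≤ η := le_min (by linarith) (by linarith)
  have hηα : η ≤ α - σ := min_le_left _ _
  have hηδ : η ≤ 1 - δ := min_le_right _ _
  obtain ⟨C₁, hC₁, hpath⟩ := IsControlledPath.exists_pathBound RP 𝓑 γ (by linarith : 0 ≤ α)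
  obtain ⟨C₂, hC₂, hbounds⟩ := IsSolution.exists_N_le_and_N_gubRemainder_le RP Sg hα hα2 hσ hσα hδ
    hδ1 hη hηα hηδ hTm hF hG
  obtain ⟨C₃, hC₃, hcrp⟩ := hG.exists_crpNorm_le RP (by linarith) hσα.le
  refine ⟨C₃ * (1 + C₂ * (1 + C₁)), by positivity, fun T hT0 hT y₀ y hy => ?_⟩
  have hpb := hpath T G y hT hy.controlled
  obtain ⟨hsup, hrem⟩ := hbounds T _ y₀ y hT0.le hT hpb hy
  refine (hcrp T _ y hT0.le hT hpb.mem hsup hrem).trans ?_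
  have hN := 𝓑.N_nonneg γ y₀
  have hK : 0 ≤ T ^ η * crpNorm 𝓑 α γ T RP.X y fun t => G (y t) :=
    mul_nonneg (Real.rpow_nonneg hT0.le η) (crpNorm_nonneg _ _ _ _ _ _ _)
  set K := crpNorm 𝓑 α γ T RP.X y fun t => G (y t)
  set W := 1 + 𝓑.N γ y₀ + T ^ η * K
  calc C₃ * (1 + C₂ * (1 + 𝓑.N γ y₀ + T ^ η * (C₁ * K))) ≤ C₃ * (W + C₂ * ((1 + C₁) * W)) := by
        gcongr
        · linarith
        · linarith [mul_nonneg hC₁.le hN, mul_nonneg hC₁.le hK]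
    _ = C₃ * (1 + C₂ * (1 + C₁)) * W := by ring

end

/-- **a-priori estimate.** Under assumptions (F) and (G), if `(y, G(y))` is a
solution of the rough evolution equation on `[0,T]` with initial data `y₀ ∈ B_γ`, then with
`η = (α - σ) ∧ (1 - δ)`,
`‖y, G(y)‖_{X,2α,γ} ≲ 1 + |y₀|_{B_γ} + T^η ‖y, G(y)‖_{X,2α,γ}`, the constant being
independent of `y₀` and uniform in `T` on compact intervals. -/
theorem statement13 (α γ δ σ Tmax : ℝ) (hα : 1/3 < α) (hα' : α < 1/2)
    (hδ : 0 ≤ δ) (hδ' : δ < 1) (hσ : 0 ≤ σ) (hσα : σ < α) (hTmax : 0 < Tmax)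
    (𝓑 : BanachScale) (Sg : ScaleSemigroup 𝓑) (RP : RoughPath α Tmax)
    (F G : 𝓑.E → 𝓑.E) (DG : 𝓑.E → 𝓑.E →ₗ[ℝ] 𝓑.E)
    (D2G : 𝓑.E → 𝓑.E →ₗ[ℝ] 𝓑.E →ₗ[ℝ] 𝓑.E)
    (D3G : 𝓑.E → 𝓑.E →ₗ[ℝ] 𝓑.E →ₗ[ℝ] 𝓑.E →ₗ[ℝ] 𝓑.E)
    (hF : AssumptionF 𝓑 γ δ F) (hG : AssumptionG 𝓑 α σ γ G DG D2G D3G) :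
    ∃ C > (0:ℝ), ∀ T : ℝ, 0 < T → T ≤ Tmax → ∀ (y₀ : 𝓑.E) (y : ℝ → 𝓑.E),
      𝓑.Mem γ y₀ → IsSolution 𝓑 Sg α γ RP.X RP.X2 F G DG y₀ T y →
      crpNorm 𝓑 α γ T RP.X y (fun t => G (y t))
        ≤ C * (1 + 𝓑.N γ y₀
            + T ^ min (α - σ) (1 - δ) * crpNorm 𝓑 α γ T RP.X y (fun t => G (y t))) := by
  obtain ⟨C, hC, hbound⟩ := statement13_general RP Sg hα hα'.le hσ hσα hδ hδ' hTmax
    hF.hasLinearGrowth (hG.isC1Diffusion (by linarith) hσα.le)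
  exact ⟨C, hC, fun T hT0 hT y₀ y _ => hbound T hT0 hT y₀ y⟩
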